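/- arXiv:2302.04731 — 3 statements merged into one kernel-verified Lean document; each statement's English description precedes it below -/
import Mathlib

section
/- Every CPAC learnable hypothesis class 𝓗 ⊆ {0,1}^ℕ is contained in a properly CPAC learnable hypothesis class 𝓗̂ that is PAC learned by a computable proper learner whose sample complexity w.r.t. 𝓗̂ is O(n² log n). -/
/-!
A computable learner for `H` yields a computable obstruction to shattering. Fix the sample size
`m` that suffices for accuracy and confidence `1/9`, and put `N = 2 (m + 1)`. For any `N` points,
the no-free-lunch average over all labelings (flip the label of a point outside the sample) gives
a labeling on which the learner has expected error at least `1/4`; such a labeling cannot be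
realized by a member of `H`. The expected error is a finite sum of computable terms, so such a
labeling `w xs` can be found by search (`exists_witness`).

The larger class `hat N w` consists of all hypotheses that avoid the labeling `w xs` on every
`N`-tuple `xs` lying strictly below some point of their support. It contains `H`; its VC dimension
is at most `N`, because among `N + 1` shattered points the largest one can be put into the support
(`hat_vc`); and it is closed under truncation, so the empirical error is minimized by a finitely
supported member with support bounded in terms of the sample. Membership of a finitely supported
hypothesis is decidable, whence a computable empirical risk minimizer exists (`computable_erm`,
`erm_spec`).

The sample complexity comes from uniform convergence for classes of finite VC dimension. The
exponential moment of the largest deviation is bounded by passing to a ghost sample with Jensen's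
inequality (`Ex_iSup_devExp_le`), symmetrizing by random swaps (`Ex_swapAvg`), replacing the
supremum by a sum over polynomially many traces with the Sauer–Shelah lemma
(`exists_representatives`), and using `cosh t ≤ exp (t² / 2)` for each term
(`swapAvg_ghostExp_le`). Markov's inequality gives an exponential tail (`Ex_badSet_le`), and
`exists_rate` finds that a sample of size of order `n² log n` makes it smaller than `1/n`.
All expectations are taken with `Ex`, an iterated sum in `ℝ≥0∞`, so no measurability or
summability conditions arise, even for suprema over uncountable classes.
-/

open Filter
open scoped ENNReal

/-- A hypothesis is a function `ℕ → Bool` (i.e. an element of `{0,1}^ℕ`). -/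
abbrev Hyp := ℕ → Bool

/-- A sample is a finite sequence of labeled examples. -/
abbrev Sample := List (ℕ × Bool)

/-- A learner maps samples to hypotheses. -/
abbrev Learner := Sample → Hyp

/-- Generalization error `L_D(h) = Pr_{(x,y)∼D}[h(x) ≠ y]`. -/
noncomputable def genError (D : PMF (ℕ × Bool)) (h : Hyp) : ℝ≥0∞ :=
  D.toOuterMeasure {p | h p.1 ≠ p.2}

/-- The distribution of `m` i.i.d. draws from `D`, as a PMF on samples of size `m`. -/
noncomputable def iidPMF (D : PMF (ℕ × Bool)) : ℕ → PMF Sample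
  | 0 => PMF.pure []
  | m + 1 => D.bind fun p => (iidPMF D m).map (List.cons p)

/-- `Pr_{S ∼ D^m}[S ∈ E]`. -/
noncomputable def samplePr (D : PMF (ℕ × Bool)) (m : ℕ) (E : Set Sample) : ℝ≥0∞ :=
  (iidPMF D m).toOuterMeasure E

/-- The PAC inequality for accuracy/confidence parameter `n` and sample size `m`:
for every distribution `D`,
`Pr_{S∼D^m}[L_D(A(S)) ≤ inf_{h∈H} L_D(h) + 1/n] ≥ 1 − 1/n`. -/
def PACCondition (A : Learner) (H : Set Hyp) (n m : ℕ) : Prop :=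
  ∀ D : PMF (ℕ × Bool),
    1 - ((n : ℝ≥0∞))⁻¹ ≤
      samplePr D m {S | genError D (A S) ≤ (⨅ h ∈ H, genError D h) + ((n : ℝ≥0∞))⁻¹}

/-- `A` PAC learns `H`. -/
def PACLearns (A : Learner) (H : Set Hyp) : Prop :=
  ∀ n : ℕ, ∃ m₀ : ℕ, ∀ m ≥ m₀, PACCondition A H n m

/-- The sample complexity of `A` w.r.t. `H`: the minimal `m₀` such that the PAC
inequality for `n` holds for all `m ≥ m₀`. -/
noncomputable def sampleComplexity (A : Learner) (H : Set Hyp) (n : ℕ) : ℕ :=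
  sInf {m₀ | ∀ m ≥ m₀, PACCondition A H n m}

/-- A learner is computable if the two-argument function `(S, x) ↦ A(S)(x)` is computable
(equivalently, there is an algorithm producing from `S` a Turing machine computing the
total function `A(S)`). -/
def ComputableLearner (A : Learner) : Prop :=
  Computable₂ fun (S : Sample) (x : ℕ) => A S x

/-- A learner is proper for `H` if it only outputs hypotheses from `H`. -/
def ProperFor (A : Learner) (H : Set Hyp) : Prop := ∀ S, A S ∈ H

/-- `H` is CPAC learnable: some computable learner PAC learns it. -/
def CPACLearnable (H : Set Hyp) : Prop :=
  ∃ A : Learner, ComputableLearner A ∧ PACLearns A H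

/-- `H` is properly CPAC learnable. -/
def ProperlyCPACLearnable (H : Set Hyp) : Prop :=
  ∃ A : Learner, ComputableLearner A ∧ ProperFor A H ∧ PACLearns A H

/-- `H` is SCPAC learnable: some computable learner PAC learns it with sample complexity
bounded by a total computable function. -/
def SCPACLearnable (H : Set Hyp) : Prop :=
  ∃ A : Learner, ComputableLearner A ∧ PACLearns A H ∧
    ∃ g : ℕ → ℕ, Computable g ∧ ∀ n, sampleComplexity A H n ≤ g n

/-- `H` is properly SCPAC learnable. -/
def ProperlySCPACLearnable (H : Set Hyp) : Prop :=
  ∃ A : Learner, ComputableLearner A ∧ ProperFor A H ∧ PACLearns A H ∧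
    ∃ g : ℕ → ℕ, Computable g ∧ ∀ n, sampleComplexity A H n ≤ g n

/-- Empirical error `L_S(h) = |{i : h(x_i) ≠ y_i}| / |S|`. -/
noncomputable def empError (S : Sample) (h : Hyp) : ℝ≥0∞ :=
  ((S.countP fun p => h p.1 != p.2 : ℕ) : ℝ≥0∞) / (S.length : ℝ≥0∞)

/-- `A` is an ERM for `H`: on every sample it outputs a hypothesis of `H` minimizing
the empirical error over `H`. -/
def IsERM (A : Learner) (H : Set Hyp) : Prop :=
  ∀ S : Sample, A S ∈ H ∧ ∀ h ∈ H, empError S (A S) ≤ empError S h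

/-- `A` is an asymptotic ERM for `H`. -/
def IsAsymptoticERM (A : Learner) (H : Set Hyp) : Prop :=
  ProperFor A H ∧
  ∃ ε : ℕ → ℝ≥0∞, (∀ m, ε m ≤ 1) ∧ Tendsto ε atTop (nhds 0) ∧
    ∀ S : Sample, empError S (A S) ≤ (⨅ h ∈ H, empError S h) + ε S.length

/-- `H` shatters the finite set `s`. -/
def Shatters (H : Set Hyp) (s : Finset ℕ) : Prop :=
  ∀ g : ℕ → Bool, ∃ h ∈ H, ∀ x ∈ s, h x = g x

/-- The VC dimension of `H` is at most `d`. -/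
def VCDimAtMost (H : Set Hyp) (d : ℕ) : Prop :=
  ∀ s : Finset ℕ, Shatters H s → s.card ≤ d

/-- `H` has finite VC dimension. -/
def FiniteVCDim (H : Set Hyp) : Prop := ∃ d, VCDimAtMost H d

/-- `w` is a `k`-witness of VC dimension for `H`: on every increasing `(k+1)`-tuple it
produces a Boolean `(k+1)`-tuple which is not the trace of any `h ∈ H` on the tuple. -/
def IsKWitness (k : ℕ) (w : List ℕ → List Bool) (H : Set Hyp) : Prop :=
  ∀ xs : List ℕ, xs.length = k + 1 → xs.Chain' (· < ·) →
    (w xs).length = k + 1 ∧ ∀ h ∈ H, xs.map h ≠ w xs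

/-- The support of a hypothesis: `h⁻¹(1)`. -/
def hypSupport (h : Hyp) : Set ℕ := {x | h x = true}

/-- `h` is finitely supported. -/
def FinitelySupported (h : Hyp) : Prop := (hypSupport h).Finite

/-- The finitely supported hypothesis with support (the set of elements of) `l`. -/
def listIndicator (l : List ℕ) : Hyp := fun x => decide (x ∈ l)

/-- A class of finitely supported hypotheses is decidable: there is an algorithm that,
given the support of a finitely supported `h` (as a list), decides whether `h ∈ H`. -/
def DecidableClass (H : Set Hyp) : Prop :=
  ∃ d : List ℕ → Bool, Computable d ∧ ∀ l : List ℕ, (d l = true ↔ listIndicator l ∈ H)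

/-- `H` shatters the full binary tree of depth `d` whose node at binary path `p`
(with `|p| < d`) is labeled `t p`: every leaf (a binary path of length `d`) is reached
by some `h ∈ H`, going right at a node labeled `x` iff `h x = 1`. -/
def ShattersTree (H : Set Hyp) (d : ℕ) (t : List Bool → ℕ) : Prop :=
  ∀ l : List Bool, l.length = d →
    ∃ h ∈ H, ∀ (i : ℕ) (hi : i < l.length), l[i] = h (t (l.take i))

/-! ### The class `𝓗_f` -/

/-- The `j`-th smallest element of the `k`-th block `I_k` of positive even numbers
(`1 ≤ j ≤ k`): `n_{kj} = k(k-1) + 2j`. -/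
def nkj (k j : ℕ) : ℕ := k * (k - 1) + 2 * j

/-- The block `I_k` (of size `k`). -/
def Iblk (k : ℕ) : Finset ℕ := (Finset.Icc 1 k).image (nkj k)

/-- `h_{kj}`: the indicator of `I_k \ {n_{kj}}`. -/
def hkj (k j : ℕ) : Hyp := fun n => decide (n ∈ Iblk k ∧ n ≠ nkj k j)

/-- `h_a`: the indicator of `I_{f(a)} ∪ {2a+1}`. -/
def hA (f : ℕ → ℕ) (a : ℕ) : Hyp := fun n => decide (n ∈ Iblk (f a) ∨ n = 2 * a + 1)

/-- The class `𝓗_f = {h_{kj} : 1 ≤ j ≤ k} ∪ {h_a : a ∈ ℕ}`. -/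
def Hf (f : ℕ → ℕ) : Set Hyp :=
  {h | ∃ k j, 1 ≤ j ∧ j ≤ k ∧ h = hkj k j} ∪ {h | ∃ a, h = hA f a}

/-! ### Good hypotheses w.r.t. a witness -/

/-- `h` is good w.r.t. the `k`-witness `w`: it has finite support and disagrees with `w`
on every increasing `(k+1)`-tuple lying strictly below `max supp(h)`. -/
def IsGood (k : ℕ) (w : List ℕ → List Bool) (h : Hyp) : Prop :=
  FinitelySupported h ∧
  ∀ xs : List ℕ, xs.length = k + 1 → xs.Chain' (· < ·) →
    (∀ x ∈ xs, x < sSup (hypSupport h)) → xs.map h ≠ w xs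

/-- The set of good hypotheses w.r.t. `w`. -/
def Hgood (k : ℕ) (w : List ℕ → List Bool) : Set Hyp := {h | IsGood k w h}

namespace CPAC

/-! ### Computable functions -/

/-- Unbounded search that always succeeds is computable. -/
theorem computable_find {α : Type*} [Primcodable α] {p : α → ℕ → Bool} (hp : Computable₂ p)
    (hex : ∀ a, ∃ n, p a n = true) : Computable fun a => Nat.find (hex a) := by
  have h : Partrec fun a => Nat.rfind fun n => (p a n : Part Bool) :=
    Partrec.rfind hp.partrec₂
  refine h.of_eq_tot fun a => ?_
  refine Nat.mem_rfind.2 ⟨?_, fun {k} hk => ?_⟩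
  · simpa using (Nat.find_spec (hex a)).symm
  · have := Nat.find_min (hex a) hk
    simpa using this

theorem computable_sum {α : Type*} [Primcodable α] {f : α → ℕ → ℕ} (hf : Computable₂ f)
    {b : α → ℕ} (hb : Computable b) :
    Computable fun a => ∑ i ∈ Finset.range (b a), f a i := by
  have h : Computable fun a => Nat.rec (motive := fun _ => ℕ) 0 (fun i s => s + f a i) (b a) := by
    refine Computable.nat_rec hb (Computable.const 0) (h := fun a q => q.2 + f a q.1) ?_
    refine Primrec.nat_add.to_comp.comp (Computable.snd.comp Computable.snd) ?_
    exact hf.comp Computable.fst (Computable.fst.comp Computable.snd)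
  refine h.of_eq fun a => ?_
  induction b a with
  | zero => simp
  | succ n ih => rw [Finset.sum_range_succ, ← ih]

theorem computable_decide_eq {α : Type*} [Primcodable α] {f g : α → ℕ}
    (hf : Computable f) (hg : Computable g) : Computable fun a => decide (f a = g a) :=
  (Primrec.eq (α := ℕ)).decide.to_comp.comp hf hg

theorem computable_decide_le {α : Type*} [Primcodable α] {f g : α → ℕ}
    (hf : Computable f) (hg : Computable g) : Computable fun a => decide (f a ≤ g a) :=
  Primrec.nat_le.decide.to_comp.comp hf hg

theorem computable_ne {α : Type*} [Primcodable α] {f g : α → Bool}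
    (hf : Computable f) (hg : Computable g) : Computable fun a => (f a != g a) :=
  Primrec₂.to_comp (f := fun a b : Bool => a != b) (Primrec.dom_bool₂ _) |>.comp hf hg

theorem computable_toNat {α : Type*} [Primcodable α] {f : α → Bool}
    (hf : Computable f) : Computable fun a => (f a).toNat :=
  (Primrec.dom_bool Bool.toNat).to_comp.comp hf

theorem computable_pow {α : Type*} [Primcodable α] {f g : α → ℕ}
    (hf : Computable f) (hg : Computable g) : Computable fun a => f a ^ g a :=
  (Primrec₂.to_comp (f := fun a b : ℕ => a ^ b) (Primrec₂.unpaired'.1 Nat.Primrec.pow)).comp hf hg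

theorem computable_testBit {α : Type*} [Primcodable α] {f g : α → ℕ}
    (hf : Computable f) (hg : Computable g) : Computable fun a => (f a).testBit (g a) := by
  have : Computable fun a => decide (f a / 2 ^ g a % 2 = 1) :=
    computable_decide_eq
      (Primrec.nat_mod.to_comp.comp
        (Primrec.nat_div.to_comp.comp hf (computable_pow (Computable.const 2) hg))
        (Computable.const 2)) (Computable.const 1)
  exact this.of_eq fun a => by rw [Nat.testBit_eq_decide_div_mod_eq]

theorem computable_getD {α β : Type*} [Primcodable α] [Primcodable β] (d : β)
    {f : α → List β} {g : α → ℕ}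
    (hf : Computable f) (hg : Computable g) : Computable fun a => (f a).getD (g a) d :=
  (Primrec.list_getD d).to_comp.comp hf hg

/-- The sum of `F (J ++ [r₁, …, r_n])` over all tuples `r` with entries below `b`. -/
def tupleSum (b : ℕ) (F : List ℕ → ℕ) : ℕ → List ℕ → ℕ
  | 0, J => F J
  | n + 1, J => ∑ r ∈ Finset.range b, tupleSum b F n (J ++ [r])

theorem computable_tupleSum {α : Type*} [Primcodable α] {b : α → ℕ} (hb : Computable b)
    {F : α → List ℕ → ℕ} (hF : Computable₂ F) (n : ℕ) :
    Computable₂ fun a J => tupleSum (b a) (F a) n J := by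
  induction n with
  | zero => exact hF
  | succ n ih =>
    refine computable_sum (f := fun (q : α × List ℕ) r => tupleSum (b q.1) (F q.1) n (q.2 ++ [r]))
      ?_ (hb.comp Computable.fst)
    exact ih.comp (Computable.fst.comp Computable.fst)
      (Computable.list_concat.comp (Computable.snd.comp Computable.fst) Computable.snd)

theorem tupleSum_eq_zero (b : ℕ) (F : List ℕ → ℕ) (n : ℕ) (J : List ℕ) :
    tupleSum b F n J = 0 ↔
      ∀ xs : List ℕ, xs.length = n → (∀ x ∈ xs, x < b) → F (J ++ xs) = 0 := by
  induction n generalizing J with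
  | zero => simp [tupleSum]
  | succ n ih =>
    simp only [tupleSum, Finset.sum_eq_zero_iff, Finset.mem_range, ih]
    constructor
    · rintro h (_ | ⟨x, xs⟩) hl hx
      · simp at hl
      · have := h x (hx x (by simp)) xs (by simpa using hl) fun y hy => hx y (by simp [hy])
        simpa using this
    · intro h x hx xs hl hxs
      have := h (x :: xs) (by simp [hl]) (by simpa [hx] using hxs)
      simpa using this

/-- Number of mistakes of `h` on the sample `S`. -/
def mistakes (h : Hyp) (S : Sample) : ℕ := S.countP fun p => h p.1 != p.2

theorem mistakes_eq_sum (h : Hyp) (S : Sample) :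
    mistakes h S = ∑ i ∈ Finset.range S.length,
      (h (S.getD i (0, false)).1 != (S.getD i (0, false)).2).toNat := by
  induction S with
  | nil => simp [mistakes]
  | cons p S ih =>
    rw [List.length_cons, Finset.sum_range_succ']
    simp only [List.getD_cons_succ, List.getD_cons_zero, ← ih]
    simp only [mistakes, List.countP_cons, Bool.toNat]
    cases (h p.1 != p.2) <;> rfl

theorem computable_mistakes :
    Computable₂ fun (S : Sample) (j : ℕ) => mistakes j.testBit S := by
  have hg : Computable fun q : (Sample × ℕ) × ℕ => q.1.1.getD q.2 (0, false) :=
    computable_getD _ (Computable.fst.comp Computable.fst) Computable.snd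
  have : Computable fun q : Sample × ℕ => ∑ i ∈ Finset.range q.1.length,
      (q.2.testBit (q.1.getD i (0, false)).1 != (q.1.getD i (0, false)).2).toNat := by
    refine computable_sum (f := fun (q : Sample × ℕ) i =>
      (q.2.testBit (q.1.getD i (0, false)).1 != (q.1.getD i (0, false)).2).toNat) ?_
      (Computable.list_length.comp Computable.fst)
    refine computable_toNat (computable_ne (computable_testBit
      (Computable.snd.comp Computable.fst) (Computable.fst.comp hg)) (Computable.snd.comp hg))
  exact this.of_eq fun q => (mistakes_eq_sum _ _).symm

/-! ### Expectations over samples -/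

/-- The expectation of `F` over lists of `m` independent draws, where `a` is drawn with
weight `D a`. -/
noncomputable def Ex {α : Type*} (D : α → ℝ≥0∞) : ℕ → (List α → ℝ≥0∞) → ℝ≥0∞
  | 0, F => F []
  | m + 1, F => ∑' a, D a * Ex D m fun S => F (a :: S)

theorem samplePr_eq (D : PMF (ℕ × Bool)) (m : ℕ) (E : Set Sample) :
    samplePr D m E = Ex D m (E.indicator 1) := by
  induction m generalizing E with
  | zero =>
    by_cases h : ([] : Sample) ∈ E <;>
      simp [samplePr, iidPMF, Ex, PMF.toOuterMeasure_pure_apply, Set.indicator, h]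
  | succ m ih =>
    simp only [samplePr, iidPMF, Ex, PMF.toOuterMeasure_bind_apply,
      PMF.toOuterMeasure_map_apply]
    refine tsum_congr fun p => ?_
    rw [← samplePr, ih]
    rfl

theorem Ex_mono {α : Type*} (D : α → ℝ≥0∞) (m : ℕ) {F G : List α → ℝ≥0∞}
    (h : ∀ S, S.length = m → F S ≤ G S) : Ex D m F ≤ Ex D m G := by
  induction m generalizing F G with
  | zero => exact h [] rfl
  | succ m ih =>
    exact ENNReal.tsum_le_tsum fun a =>
      mul_le_mul_right (ih fun S hS => h (a :: S) (by simp [hS])) _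

theorem Ex_const {α : Type*} {D : α → ℝ≥0∞} (hD : ∑' a, D a = 1) (m : ℕ) (c : ℝ≥0∞) :
    Ex D m (fun _ => c) = c := by
  induction m with
  | zero => rfl
  | succ m ih => simp only [Ex, ih, ENNReal.tsum_mul_right, hD, one_mul]

theorem Ex_add {α : Type*} (D : α → ℝ≥0∞) (m : ℕ) (F G : List α → ℝ≥0∞) :
    Ex D m (fun S => F S + G S) = Ex D m F + Ex D m G := by
  induction m generalizing F G with
  | zero => rfl
  | succ m ih => simp only [Ex, ih, mul_add, ENNReal.tsum_add]

theorem Ex_const_mul {α : Type*} (D : α → ℝ≥0∞) (m : ℕ) (c : ℝ≥0∞) (F : List α → ℝ≥0∞) :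
    Ex D m (fun S => c * F S) = c * Ex D m F := by
  induction m generalizing F with
  | zero => rfl
  | succ m ih => simp only [Ex, ih, mul_left_comm _ c, ENNReal.tsum_mul_left]

theorem Ex_indicator_compl (D : PMF (ℕ × Bool)) (m : ℕ) (E : Set Sample) :
    Ex D m (E.indicator 1) + Ex D m (Eᶜ.indicator 1) = 1 := by
  rw [← Ex_add, ← Ex_const D.tsum_coe m 1]
  congr 1
  funext S
  by_cases h : S ∈ E <;> simp [h]

theorem genError_le_one (D : PMF (ℕ × Bool)) (h : Hyp) : genError D h ≤ 1 := by
  refine le_trans (MeasureTheory.measure_mono (Set.subset_univ _)) ?_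
  rw [PMF.toOuterMeasure_apply]
  simp [D.tsum_coe]

theorem tsum_map_mul {α β : Type*} (p : PMF α) (f : α → β) (G : β → ℝ≥0∞) :
    ∑' b, p.map f b * G b = ∑' a, p a * G (f a) := by
  classical
  simp only [PMF.map_apply, ← ENNReal.tsum_mul_right]
  rw [ENNReal.tsum_comm]
  refine tsum_congr fun a => ?_
  rw [tsum_eq_single (f a)]
  · simp
  · intro b hb
    simp [hb]

/-! ### No free lunch -/

/-- If some member of the class makes no error under `D`, the PAC inequality bounds the
expected error of the learner. -/
theorem expected_error_le {A : Learner} {H : Set Hyp} {n m : ℕ}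
    (hA : PACCondition A H n m) (D : PMF (ℕ × Bool)) {h : Hyp} (hh : h ∈ H)
    (h0 : genError D h = 0) :
    Ex D m (fun S => genError D (A S)) ≤ (n : ℝ≥0∞)⁻¹ + (n : ℝ≥0∞)⁻¹ := by
  have hinf : (⨅ h ∈ H, genError D h) = 0 :=
    le_antisymm (h0 ▸ iInf₂_le h hh) zero_le
  have h1 := hA D
  rw [hinf, zero_add, samplePr_eq] at h1
  set E : Set Sample := {S | genError D (A S) ≤ (n : ℝ≥0∞)⁻¹} with hE
  have hc := Ex_indicator_compl D m E
  have hq : Ex D m (Eᶜ.indicator 1) ≤ (n : ℝ≥0∞)⁻¹ := by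
    have hne : Ex D m (E.indicator 1) ≠ ⊤ := by
      intro h; rw [h] at hc; simp at hc
    have h2 : 1 ≤ Ex D m (E.indicator 1) + (n : ℝ≥0∞)⁻¹ := tsub_le_iff_right.1 h1
    rw [← hc] at h2
    exact (ENNReal.add_le_add_iff_left hne).1 h2
  calc Ex D m (fun S => genError D (A S))
      ≤ Ex D m (fun S => (n : ℝ≥0∞)⁻¹ + Eᶜ.indicator 1 S) := by
        refine Ex_mono _ _ fun S _ => ?_
        by_cases hS : S ∈ E
        · exact le_trans hS le_self_add
        · simpa [hS] using (genError_le_one D (A S)).trans le_add_self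
    _ = (n : ℝ≥0∞)⁻¹ + Ex D m (Eᶜ.indicator 1) := by
        rw [Ex_add, Ex_const D.tsum_coe]
    _ ≤ _ := by gcongr

/-- The sample with points `xs[r]`, `r ∈ J`, labeled by the bits of `g`. -/
def labeled (xs : List ℕ) (g : ℕ) (J : List ℕ) : Sample :=
  J.map fun r => (xs.getD r 0, g.testBit r)

/-- The number of the `N` points `xs[r]` that `h` labels differently from the bits of `g`. -/
def disagree (N : ℕ) (xs : List ℕ) (g : ℕ) (h : Hyp) : ℕ :=
  ∑ r ∈ Finset.range N, (h (xs.getD r 0) != g.testBit r).toNat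

/-- The number of errors of `A` on the points `xs` labeled by `g`, summed over all samples
of size `m` drawn from these points. -/
def totalErr (A : Learner) (N m : ℕ) (xs : List ℕ) (g : ℕ) : ℕ :=
  tupleSum N (fun J => disagree N xs g (A (labeled xs g J))) m []

/-- The uniform distribution on the `N` points `xs[r]` labeled by the bits of `g`. -/
noncomputable def labeledPMF (N : ℕ) [NeZero N] (xs : List ℕ) (g : ℕ) : PMF (ℕ × Bool) :=
  (PMF.uniformOfFintype (Fin N)).map fun r : Fin N =>
    (xs.getD r.val 0, g.testBit r.val)

theorem mul_tsum_labeledPMF (N : ℕ) [NeZero N] (xs : List ℕ) (g : ℕ) (G : ℕ × Bool → ℝ≥0∞) :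
    (N : ℝ≥0∞) * ∑' p, labeledPMF N xs g p * G p =
      ∑ r ∈ Finset.range N, G (xs.getD r 0, g.testBit r) := by
  have hN : (N : ℝ≥0∞) ≠ 0 := by exact_mod_cast NeZero.ne N
  rw [labeledPMF, tsum_map_mul, tsum_fintype, Finset.mul_sum, Finset.sum_range]
  refine Finset.sum_congr rfl fun r _ => ?_
  rw [PMF.uniformOfFintype_apply, Fintype.card_fin, ← mul_assoc,
    ENNReal.mul_inv_cancel hN (ENNReal.natCast_ne_top N), one_mul]

theorem mul_genError_labeledPMF (N : ℕ) [NeZero N] (xs : List ℕ) (g : ℕ) (h : Hyp) :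
    (N : ℝ≥0∞) * genError (labeledPMF N xs g) h = disagree N xs g h := by
  have : genError (labeledPMF N xs g) h =
      ∑' p, labeledPMF N xs g p * ((h p.1 != p.2).toNat : ℝ≥0∞) := by
    rw [genError, PMF.toOuterMeasure_apply]
    refine tsum_congr fun p => ?_
    by_cases hp : h p.1 = p.2
    · simp [Set.indicator, hp]
    · have hb : (h p.1 != p.2) = true := bne_iff_ne.2 hp
      simp [Set.indicator, hp, hb]
  rw [this, mul_tsum_labeledPMF, disagree]
  push_cast
  rfl

/-- An expectation over samples from `labeledPMF`, scaled by `N ^ m`, is a sum of natural numbers;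
this is what makes expected errors available to a search. The prefix `J` carries the induction. -/
theorem mul_Ex_labeledPMF (N : ℕ) [NeZero N] (xs : List ℕ) (g : ℕ) (F : Sample → ℕ) (m : ℕ)
    (J : List ℕ) :
    (N : ℝ≥0∞) ^ m * Ex (labeledPMF N xs g) m (fun S => F (labeled xs g J ++ S)) =
      tupleSum N (fun J => F (labeled xs g J)) m J := by
  induction m generalizing J with
  | zero => simp [Ex, tupleSum]
  | succ m ih =>
    rw [Ex, pow_succ, mul_assoc, mul_tsum_labeledPMF, tupleSum, Finset.mul_sum]
    push_cast
    refine Finset.sum_congr rfl fun r _ => ?_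
    rw [← ih]
    simp [labeled]

/-- A labeling on which the total error of the learner is large is not realized by `H`. -/
theorem not_realized {A : Learner} {H : Set Hyp} {m N : ℕ} (hN : N ≠ 0)
    (hA : PACCondition A H 9 m) (xs : List ℕ) (g : ℕ)
    (hg : N ^ (m + 1) ≤ 4 * totalErr A N m xs g) {h : Hyp} (hh : h ∈ H) :
    ∃ r < N, h (xs.getD r 0) ≠ g.testBit r := by
  by_contra! hcon
  have : NeZero N := ⟨hN⟩
  have hN0 : (N : ℝ≥0∞) ≠ 0 := by exact_mod_cast hN
  have h0 : genError (labeledPMF N xs g) h = 0 := by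
    have h1 := mul_genError_labeledPMF N xs g h
    have h2 : disagree N xs g h = 0 :=
      Finset.sum_eq_zero fun r hr => by rw [hcon r (Finset.mem_range.1 hr)]; simp
    rw [h2] at h1
    simpa [hN] using h1
  have h1 := expected_error_le hA (labeledPMF N xs g) hh h0
  have h2 : (N : ℝ≥0∞) ^ (m + 1) * Ex (labeledPMF N xs g) m
      (fun S => genError (labeledPMF N xs g) (A S)) = totalErr A N m xs g := by
    rw [pow_succ, mul_assoc, ← Ex_const_mul]
    simp only [mul_genError_labeledPMF]
    exact mul_Ex_labeledPMF N xs g (fun S => disagree N xs g (A S)) m []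
  have hK0 : (N : ℝ≥0∞) ^ (m + 1) ≠ 0 := pow_ne_zero _ hN0
  have hKt : (N : ℝ≥0∞) ^ (m + 1) ≠ ⊤ := ENNReal.pow_ne_top (ENNReal.natCast_ne_top N)
  have h3 : (N : ℝ≥0∞) ^ (m + 1) ≤ 4 * totalErr A N m xs g := by exact_mod_cast hg
  rw [← h2, mul_left_comm] at h3
  have h4 : (1 : ℝ≥0∞) ≤ 4 * Ex (labeledPMF N xs g) m
      (fun S => genError (labeledPMF N xs g) (A S)) := by
    rw [← ENNReal.mul_le_mul_iff_right hK0 hKt]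
    simpa using h3
  -- The choice `n = 9` gives expected error at most `2 / 9 < 1 / 4`.
  have h5 : (1 : ℝ≥0∞) ≤ 4 * ((9 : ℕ) : ℝ≥0∞)⁻¹ + 4 * ((9 : ℕ) : ℝ≥0∞)⁻¹ := by
    rw [← mul_add]; exact h4.trans (by gcongr)
  have h6 : (4 : ℝ≥0∞) * ((9 : ℕ) : ℝ≥0∞)⁻¹ + 4 * ((9 : ℕ) : ℝ≥0∞)⁻¹
      = ENNReal.ofReal (8 / 9) := by
    rw [show (8 / 9 : ℝ) = 4 * (9 : ℝ)⁻¹ + 4 * (9 : ℝ)⁻¹ by norm_num,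
      ENNReal.ofReal_add (by norm_num) (by norm_num), ENNReal.ofReal_mul (by norm_num),
      ENNReal.ofReal_inv_of_pos (by norm_num)]
    norm_num
  rw [h6, ← ENNReal.ofReal_one, ENNReal.ofReal_le_ofReal_iff (by norm_num)] at h5
  norm_num at h5

/-- Flipping the label of a point outside the sample does not change the prediction of the
learner there, so over all labelings exactly half of the predictions are wrong. -/
theorem sum_disagree_ge (A : Learner) (N : ℕ) (xs J : List ℕ) :
    (N - J.length) * 2 ^ N ≤
      2 * ∑ g ∈ Finset.range (2 ^ N), disagree N xs g (A (labeled xs g J)) := by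
  simp only [disagree]
  rw [Finset.sum_comm, Finset.mul_sum]
  have key : ∀ r ∈ Finset.range N \ J.toFinset,
      2 ^ N = 2 * ∑ g ∈ Finset.range (2 ^ N),
        (A (labeled xs g J) (xs.getD r 0) != g.testBit r).toNat := by
    intro r hr
    simp only [Finset.mem_sdiff, Finset.mem_range, List.mem_toFinset] at hr
    obtain ⟨hrN, hrJ⟩ := hr
    have hlab : ∀ g, labeled xs (g ^^^ 2 ^ r) J = labeled xs g J := by
      intro g
      refine List.map_congr_left fun i hi => ?_
      have : r ≠ i := fun h => hrJ (h ▸ hi)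
      simp [this]
    have hflip : ∑ g ∈ Finset.range (2 ^ N),
        (A (labeled xs g J) (xs.getD r 0) != g.testBit r).toNat =
        ∑ g ∈ Finset.range (2 ^ N),
        (A (labeled xs g J) (xs.getD r 0) != !g.testBit r).toNat := by
      have hmem : ∀ g ∈ Finset.range (2 ^ N), g ^^^ 2 ^ r ∈ Finset.range (2 ^ N) := by
        intro g hg
        rw [Finset.mem_range] at hg ⊢
        exact Nat.xor_lt_two_pow hg (Nat.pow_lt_pow_right (by norm_num) hrN)
      refine Finset.sum_nbij' (fun g => g ^^^ 2 ^ r) (fun g => g ^^^ 2 ^ r) hmem hmem ?_ ?_ ?_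
      · intro g _; simp
      · intro g _; simp
      · intro g _; simp [hlab]
    rw [two_mul]
    nth_rewrite 2 [hflip]
    rw [← Finset.sum_add_distrib]
    trans ∑ g ∈ Finset.range (2 ^ N), 1
    · simp
    · refine Finset.sum_congr rfl fun g _ => ?_
      cases A (labeled xs g J) (xs.getD r 0) <;> cases g.testBit r <;> rfl
  calc (N - J.length) * 2 ^ N ≤ (Finset.range N \ J.toFinset).card * 2 ^ N := by
        gcongr
        have h1 := Finset.le_card_sdiff J.toFinset (Finset.range N)
        have h2 := J.toFinset_card_le
        rw [Finset.card_range] at h1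
        omega
    _ = ∑ r ∈ Finset.range N \ J.toFinset, 2 ^ N := by rw [Finset.sum_const, smul_eq_mul]
    _ = _ := Finset.sum_congr rfl key
    _ ≤ _ := Finset.sum_le_sum_of_subset Finset.sdiff_subset

/-- `sum_disagree_ge` summed over all samples that extend `J` by `m` further points. -/
theorem sum_tupleSum_ge (A : Learner) (N m : ℕ) (xs J : List ℕ) :
    N ^ m * ((N - J.length - m) * 2 ^ N) ≤
      2 * ∑ g ∈ Finset.range (2 ^ N),
        tupleSum N (fun J => disagree N xs g (A (labeled xs g J))) m J := by
  induction m generalizing J with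
  | zero => simpa [tupleSum] using sum_disagree_ge A N xs J
  | succ m ih =>
    simp only [tupleSum]
    rw [Finset.sum_comm, Finset.mul_sum]
    calc _ = ∑ r ∈ Finset.range N, N ^ m * ((N - J.length - (m + 1)) * 2 ^ N) := by
          rw [Finset.sum_const, smul_eq_mul, Finset.card_range]; ring
      _ ≤ _ := by
          refine Finset.sum_le_sum fun r _ => le_trans (le_of_eq ?_) (ih (J ++ [r]))
          have : N - J.length - (m + 1) = N - (J ++ [r]).length - m := by
            rw [List.length_append, List.length_singleton]; omega
          rw [this]

/-- By averaging over all labelings of `N = 2 (m + 1)` points, some labeling has expected error at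
least `1 / 4`, since more than half of the points lie outside any sample of size `m`. -/
theorem exists_hard_labeling (A : Learner) (m : ℕ) (xs : List ℕ) :
    ∃ g, (2 * (m + 1)) ^ (m + 1) ≤ 4 * totalErr A (2 * (m + 1)) m xs g := by
  set N := 2 * (m + 1) with hN
  have h := sum_tupleSum_ge A N m xs []
  have h1 : ∑ g ∈ Finset.range (2 ^ N), N ^ (m + 1) ≤
      ∑ g ∈ Finset.range (2 ^ N), 4 * totalErr A N m xs g := by
    rw [← Finset.mul_sum, Finset.sum_const, Finset.card_range, smul_eq_mul]
    calc 2 ^ N * N ^ (m + 1) ≤ 2 * (N ^ m * ((N - ([] : List ℕ).length - m) * 2 ^ N)) := by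
          have : N ≤ 2 * (N - ([] : List ℕ).length - m) := by
            simp only [List.length_nil]; omega
          calc 2 ^ N * N ^ (m + 1) = (N ^ m * 2 ^ N) * N := by ring
            _ ≤ (N ^ m * 2 ^ N) * (2 * (N - ([] : List ℕ).length - m)) := by gcongr
            _ = _ := by ring
      _ ≤ 2 * (2 * _) := by gcongr
      _ = _ := by simp only [totalErr]; ring
  obtain ⟨g, -, hg⟩ := Finset.exists_le_of_sum_le (by simp) h1
  exact ⟨g, hg⟩

theorem computable_disagree {α : Type*} [Primcodable α] (N : ℕ) {xs : α → List ℕ} {g : α → ℕ}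
    {h : α → Hyp} (hxs : Computable xs) (hg : Computable g) (hh : Computable₂ h) :
    Computable fun a => disagree N (xs a) (g a) (h a) := by
  refine computable_sum (f := fun a r =>
    (h a ((xs a).getD r 0) != (g a).testBit r).toNat) ?_ (Computable.const N)
  exact computable_toNat (computable_ne
    (hh.comp Computable.fst (computable_getD 0 (hxs.comp Computable.fst) Computable.snd))
    (computable_testBit (hg.comp Computable.fst) Computable.snd))

theorem computable_map {α β γ : Type*} [Primcodable α] [Primcodable β] [Primcodable γ]
    {f : α → List β} {g : α → β → γ} (hf : Primrec f) (hg : Primrec₂ g) :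
    Computable fun a => (f a).map (g a) :=
  (Primrec.list_map hf hg).to_comp

theorem computable_totalErr {A : Learner} (hA : ComputableLearner A) (N m : ℕ) :
    Computable₂ (totalErr A N m) := by
  have hlab : Computable fun q : (List ℕ × ℕ) × List ℕ => labeled q.1.1 q.1.2 q.2 := by
    refine computable_map (g := fun (q : (List ℕ × ℕ) × List ℕ) r =>
      (q.1.1.getD r 0, q.1.2.testBit r)) Primrec.snd ?_
    refine Primrec.pair ((Primrec.list_getD 0).comp
      (Primrec.fst.comp (Primrec.fst.comp Primrec.fst)) Primrec.snd) ?_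
    have h : Primrec₂ fun g r : ℕ => decide (g / 2 ^ r % 2 = 1) :=
      (Primrec.eq (α := ℕ)).decide.comp (Primrec.nat_mod.comp (Primrec.nat_div.comp Primrec.fst
        ((Primrec₂.unpaired'.1 Nat.Primrec.pow).comp (Primrec.const 2) Primrec.snd))
        (Primrec.const 2)) (Primrec.const 1)
    have h' : Primrec₂ Nat.testBit := h.of_eq fun g r => by rw [Nat.testBit_eq_decide_div_mod_eq]
    exact h'.comp (Primrec.snd.comp (Primrec.fst.comp Primrec.fst)) Primrec.snd
  have h1 : Computable₂ fun (q : List ℕ × ℕ) (J : List ℕ) =>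
      disagree N q.1 q.2 (A (labeled q.1 q.2 J)) :=
    computable_disagree (α := (List ℕ × ℕ) × List ℕ) N (xs := fun q => q.1.1)
      (g := fun q => q.1.2) (h := fun q => A (labeled q.1.1 q.1.2 q.2))
      (Computable.fst.comp Computable.fst) (Computable.snd.comp Computable.fst)
      (hA.comp (hlab.comp Computable.fst) Computable.snd)
  exact (computable_tupleSum (α := List ℕ × ℕ) (Computable.const N) h1 m).comp
    Computable.id (Computable.const [])

/-- A computable witness of bounded VC dimension: for every list `xs` the bits of `w xs`
are a labeling of the first `N` entries of `xs` realized by no member of `H`. -/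
theorem exists_witness {H : Set Hyp} (hH : CPACLearnable H) :
    ∃ N, ∃ w : List ℕ → ℕ, Computable w ∧
      ∀ h ∈ H, ∀ xs, ∃ r < N, h (xs.getD r 0) ≠ (w xs).testBit r := by
  obtain ⟨A, hA, hP⟩ := hH
  obtain ⟨m, hm⟩ := hP 9
  have hex : ∀ xs : List ℕ, ∃ g,
      decide ((2 * (m + 1)) ^ (m + 1) ≤ 4 * totalErr A (2 * (m + 1)) m xs g) = true := by
    intro xs
    obtain ⟨g, hg⟩ := exists_hard_labeling A m xs
    exact ⟨g, by simpa using hg⟩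
  refine ⟨2 * (m + 1), fun xs => Nat.find (hex xs), ?_, ?_⟩
  · refine computable_find (p := fun xs g =>
      decide ((2 * (m + 1)) ^ (m + 1) ≤ 4 * totalErr A (2 * (m + 1)) m xs g)) ?_ hex
    exact computable_decide_le (Computable.const _)
      (Primrec.nat_mul.to_comp.comp (Computable.const 4) (computable_totalErr hA _ m))
  · intro h hh xs
    exact not_realized (by omega) (hm m le_rfl) xs _ (of_decide_eq_true (Nat.find_spec (hex xs))) hh

/-! ### The enlarged class and its empirical risk minimizer -/

/-- The hypotheses that avoid the labeling `w xs` on every `N`-tuple `xs` lying strictly below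
some point of their support. -/
def hat (N : ℕ) (w : List ℕ → ℕ) : Set Hyp :=
  {h | ∀ M, h M = true → ∀ xs : List ℕ, xs.length = N → (∀ x ∈ xs, x < M) →
    ∃ r < N, h (xs.getD r 0) ≠ (w xs).testBit r}

/-- A point in the support forces the witness labeling to be avoided below it, so no set of
`N + 1` points is shattered. -/
theorem hat_vc (N : ℕ) (w : List ℕ → ℕ) : VCDimAtMost (hat N w) N := by
  intro s hs
  by_contra! hcard
  have hne : s.Nonempty := Finset.card_pos.1 (by omega)
  -- `xs` lists `N` points of `s` below its maximum `M`. Membership in `hat N w` fails for a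
  -- hypothesis that is `1` at `M` and follows `w xs` on `xs`.
  set M := s.max' hne with hM
  have hMs : M ∈ s := s.max'_mem hne
  set xs := (s.erase M).toList.take N with hxs
  have hlen : xs.length = N := by
    rw [hxs, List.length_take, Finset.length_toList, Finset.card_erase_of_mem hMs]
    omega
  have hmem : ∀ x ∈ xs, x ∈ s.erase M := fun x hx =>
    Finset.mem_toList.1 (List.mem_of_mem_take hx)
  have hlt : ∀ x ∈ xs, x < M := fun x hx =>
    lt_of_le_of_ne (s.le_max' x (Finset.mem_of_mem_erase (hmem x hx)))
      (Finset.ne_of_mem_erase (hmem x hx))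
  have hnd : xs.Nodup := (Finset.nodup_toList _).sublist (List.take_sublist _ _)
  obtain ⟨h, hh, heq⟩ := hs fun x => if x = M then true else (w xs).testBit (xs.idxOf x)
  obtain ⟨r, hr, hne'⟩ := hh M (by simpa using heq M hMs) xs hlen hlt
  have hr' : r < xs.length := hlen ▸ hr
  have hx : xs[r] ∈ xs := List.getElem_mem hr'
  apply hne'
  rw [List.getD_eq_getElem _ _ hr', heq _ (Finset.mem_of_mem_erase (hmem _ hx)),
    if_neg (hlt _ hx).ne, hnd.idxOf_getElem]

theorem disagree_eq_zero {N : ℕ} {xs : List ℕ} {g : ℕ} {h : Hyp} :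
    disagree N xs g h = 0 ↔ ∀ r < N, h (xs.getD r 0) = g.testBit r := by
  simp only [disagree, Finset.sum_eq_zero_iff, Finset.mem_range, Bool.toNat_eq_zero,
    bne_eq_false_iff_eq]

/-- The number of violations of the defining condition of `hat N w` by the hypothesis with
binary code `j`. -/
def violations (N : ℕ) (w : List ℕ → ℕ) (j : ℕ) : ℕ :=
  ∑ M ∈ Finset.range j, (j.testBit M).toNat *
    tupleSum M (fun xs => (decide (disagree N xs (w xs) j.testBit = 0)).toNat) N []

theorem violations_eq_zero {N : ℕ} {w : List ℕ → ℕ} {j : ℕ} :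
    violations N w j = 0 ↔ j.testBit ∈ hat N w := by
  simp only [violations, Finset.sum_eq_zero_iff, Finset.mem_range, Nat.mul_eq_zero,
    Bool.toNat_eq_zero, tupleSum_eq_zero, List.nil_append, decide_eq_false_iff_not,
    disagree_eq_zero, hat, Set.mem_ofPred_eq]
  constructor
  · intro h M hM xs hl hx
    have hMj : M < j := lt_of_lt_of_le Nat.lt_two_pow_self (Nat.ge_two_pow_of_testBit hM)
    rcases h M hMj with h | h
    · simp [h] at hM
    · simpa using h xs hl hx
  · intro h M _
    rcases hb : j.testBit M with _ | _
    · exact Or.inl rfl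
    · right
      intro xs hl hx
      simpa using h M hb xs hl hx

theorem computable_violations (N : ℕ) {w : List ℕ → ℕ} (hw : Computable w) :
    Computable (violations N w) := by
  refine computable_sum (f := fun j M => (j.testBit M).toNat *
    tupleSum M (fun xs => (decide (disagree N xs (w xs) j.testBit = 0)).toNat) N []) ?_
    Computable.id
  refine Primrec.nat_mul.to_comp.comp
    (computable_toNat (computable_testBit Computable.fst Computable.snd)) ?_
  refine (computable_tupleSum (α := ℕ × ℕ) (b := fun q => q.2) (F := fun q xs =>
    (decide (disagree N xs (w xs) q.1.testBit = 0)).toNat) Computable.snd ?_ N).comp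
    Computable.id (Computable.const [])
  refine computable_toNat (computable_decide_eq ?_ (Computable.const 0))
  exact computable_disagree (α := (ℕ × ℕ) × List ℕ) N (h := fun q => q.1.1.testBit)
    Computable.snd (hw.comp Computable.snd)
    (computable_testBit (Computable.fst.comp (Computable.fst.comp Computable.fst)) Computable.snd)

/-- A strict upper bound of the points of a sample. -/
def ptBound (S : Sample) : ℕ := Encodable.encode S + 1

theorem lt_ptBound {S : Sample} {p : ℕ × Bool} (hp : p ∈ S) : p.1 < ptBound S := by
  induction S with
  | nil => simp at hp
  | cons q S ih =>
    have h1 : Encodable.encode (q :: S) =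
      (Nat.pair (Encodable.encode q) (Encodable.encode S)) + 1 := rfl
    rw [ptBound, h1]
    rcases List.mem_cons.1 hp with rfl | hp
    · have h2 : Encodable.encode p = Nat.pair p.1 (Encodable.encode p.2) := rfl
      have h3 := Nat.left_le_pair p.1 (Encodable.encode p.2)
      have h4 := Nat.left_le_pair (Encodable.encode p) (Encodable.encode S)
      omega
    · have h3 := ih hp
      have h4 := Nat.right_le_pair (Encodable.encode q) (Encodable.encode S)
      rw [ptBound] at h3
      omega

theorem mistakes_congr {h h' : Hyp} {S : Sample} (H : ∀ p ∈ S, h p.1 = h' p.1) :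
    mistakes h S = mistakes h' S := by
  refine List.countP_congr fun p hp => ?_
  rw [H p hp]

/-- Truncating a member of `hat N w` keeps it in the class, since points are only removed from
its support. -/
theorem exists_code {N : ℕ} {w : List ℕ → ℕ} {h : Hyp} (hh : h ∈ hat N w) (L : ℕ) :
    ∃ j < 2 ^ L, j.testBit ∈ hat N w ∧ ∀ x < L, j.testBit x = h x := by
  have hlt : ∀ x < L, (Nat.ofBits fun i : Fin L => h i).testBit x = h x := fun x hx =>
    Nat.testBit_ofBits_lt _ _ hx
  refine ⟨Nat.ofBits fun i : Fin L => h i, Nat.ofBits_lt_two_pow _, ?_, hlt⟩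
  intro M hM xs hl hx
  have hML : M < L := by
    by_contra! hcon
    rw [Nat.testBit_ofBits_ge _ _ hcon] at hM
    simp at hM
  rw [hlt M hML] at hM
  obtain ⟨r, hr, hne⟩ := hh M hM xs hl hx
  refine ⟨r, hr, ?_⟩
  have hr' : r < xs.length := hl ▸ hr
  rw [List.getD_eq_getElem _ _ hr'] at hne ⊢
  rwa [hlt _ ((hx _ (List.getElem_mem hr')).trans hML)]

/-- Vanishes exactly when `j` codes a member of `hat N w` that makes no more mistakes on `S`
than any member with a code below `2 ^ ptBound S`. -/
def ermDefect (N : ℕ) (w : List ℕ → ℕ) (S : Sample) (j : ℕ) : ℕ :=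
  violations N w j + ∑ i ∈ Finset.range (2 ^ ptBound S),
    (decide (violations N w i = 0)).toNat * (mistakes j.testBit S - mistakes i.testBit S)

theorem computable_ermDefect (N : ℕ) {w : List ℕ → ℕ} (hw : Computable w) :
    Computable₂ (ermDefect N w) := by
  have hv := computable_violations N hw
  refine Primrec.nat_add.to_comp.comp (hv.comp Computable.snd) ?_
  refine computable_sum (α := Sample × ℕ) (f := fun q i => (decide (violations N w i = 0)).toNat *
    (mistakes q.2.testBit q.1 - mistakes i.testBit q.1)) (b := fun q => 2 ^ ptBound q.1) ?_ ?_
  · refine Primrec.nat_mul.to_comp.comp (computable_toNat (computable_decide_eq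
      (hv.comp Computable.snd) (Computable.const 0))) (Primrec.nat_sub.to_comp.comp ?_ ?_)
    · exact computable_mistakes.comp (Computable.fst.comp Computable.fst)
        (Computable.snd.comp Computable.fst)
    · exact computable_mistakes.comp (Computable.fst.comp Computable.fst) Computable.snd
  · exact computable_pow (Computable.const 2)
      (Computable.succ.comp (Computable.encode.comp Computable.fst))

/-- A member of `hat N w` with finite support that makes the fewest mistakes among those with finite
support has defect zero. -/
theorem exists_erm_code (N : ℕ) (w : List ℕ → ℕ) (S : Sample) :
    ∃ j, decide (ermDefect N w S j = 0) = true := by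
  have hne : ∃ j, violations N w j = 0 :=
    ⟨0, violations_eq_zero.2 fun M hM => by simp at hM⟩
  obtain ⟨j, hj, hmin⟩ := exists_minimalFor_of_wellFoundedLT
    (fun j => violations N w j = 0) (fun j => mistakes j.testBit S) hne
  refine ⟨j, ?_⟩
  simp only [ermDefect, decide_eq_true_eq, Nat.add_eq_zero_iff, Finset.sum_eq_zero_iff,
    Nat.mul_eq_zero, Bool.toNat_eq_zero, decide_eq_false_iff_not]
  refine ⟨hj, fun i _ => ?_⟩
  by_cases hi : violations N w i = 0
  · right
    rcases le_total (mistakes j.testBit S) (mistakes i.testBit S) with h | h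
    · omega
    · have := hmin hi h
      simp only at this
      omega
  · exact Or.inl hi

/-- The empirical risk minimizer for `hat N w`. -/
def erm (N : ℕ) (w : List ℕ → ℕ) : Learner := fun S => (Nat.find (exists_erm_code N w S)).testBit

theorem computable_erm (N : ℕ) {w : List ℕ → ℕ} (hw : Computable w) :
    ComputableLearner (erm N w) := by
  have h : Computable fun S => Nat.find (exists_erm_code N w S) :=
    computable_find (p := fun S j => decide (ermDefect N w S j = 0))
      (computable_decide_eq (computable_ermDefect N hw) (Computable.const 0)) _
  exact computable_testBit (h.comp Computable.fst) Computable.snd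

theorem erm_spec (N : ℕ) (w : List ℕ → ℕ) (S : Sample) :
    erm N w S ∈ hat N w ∧ ∀ h ∈ hat N w, mistakes (erm N w S) S ≤ mistakes h S := by
  suffices key : ∀ j, decide (ermDefect N w S j = 0) = true →
      j.testBit ∈ hat N w ∧ ∀ h ∈ hat N w, mistakes j.testBit S ≤ mistakes h S from
    key _ (Nat.find_spec (exists_erm_code N w S))
  intro j hs
  simp only [ermDefect, decide_eq_true_eq, Nat.add_eq_zero_iff, Finset.sum_eq_zero_iff,
    Nat.mul_eq_zero, Bool.toNat_eq_zero, decide_eq_false_iff_not, Finset.mem_range] at hs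
  refine ⟨violations_eq_zero.1 hs.1, fun h hh => ?_⟩
  obtain ⟨i, hi, hih, heq⟩ := exists_code hh (ptBound S)
  rw [← mistakes_congr (h := i.testBit) fun p hp => heq _ (lt_ptBound hp)]
  rcases hs.2 i hi with h1 | h1
  · exact absurd (violations_eq_zero.2 hih) h1
  · exact Nat.sub_eq_zero_iff_le.1 h1

/-! ### Uniform convergence -/

/-- The zero-one loss. -/
def loss (h : Hyp) (z : ℕ × Bool) : ℝ := if h z.1 = z.2 then 0 else 1

/-- The generalization error as a real number. -/
noncomputable def risk (D : PMF (ℕ × Bool)) (h : Hyp) : ℝ := (genError D h).toReal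

theorem ofReal_risk (D : PMF (ℕ × Bool)) (h : Hyp) :
    ENNReal.ofReal (risk D h) = genError D h :=
  ENNReal.ofReal_toReal ((genError_le_one D h).trans_lt ENNReal.one_lt_top).ne

theorem risk_nonneg (D : PMF (ℕ × Bool)) (h : Hyp) : 0 ≤ risk D h := ENNReal.toReal_nonneg

theorem risk_le_one (D : PMF (ℕ × Bool)) (h : Hyp) : risk D h ≤ 1 := by
  rw [← ENNReal.toReal_one]
  exact ENNReal.toReal_mono ENNReal.one_ne_top (genError_le_one D h)

/-- Jensen's inequality for the exponential of the loss. -/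
theorem exp_risk_le (D : PMF (ℕ × Bool)) (h : Hyp) (t : ℝ) :
    ENNReal.ofReal (Real.exp (t * risk D h)) ≤
      ∑' z, D z * ENNReal.ofReal (Real.exp (t * loss h z)) := by
  have hsplit : ∑' z, D z * ENNReal.ofReal (Real.exp (t * loss h z)) =
      genError D h * ENNReal.ofReal (Real.exp t) + D.toOuterMeasure {p | h p.1 ≠ p.2}ᶜ := by
    rw [genError, PMF.toOuterMeasure_apply, PMF.toOuterMeasure_apply, ← ENNReal.tsum_mul_right,
      ← ENNReal.tsum_add]
    refine tsum_congr fun z => ?_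
    by_cases hz : h z.1 = z.2 <;> simp [loss, hz, Set.indicator]
  have hone : genError D h + D.toOuterMeasure {p | h p.1 ≠ p.2}ᶜ = 1 := by
    rw [genError, PMF.toOuterMeasure_apply, PMF.toOuterMeasure_apply, ← ENNReal.tsum_add,
      ← D.tsum_coe]
    refine tsum_congr fun z => ?_
    by_cases hz : h z.1 = z.2 <;> simp [hz, Set.indicator]
  have hb : D.toOuterMeasure {p | h p.1 ≠ p.2}ᶜ = ENNReal.ofReal (1 - risk D h) := by
    rw [ENNReal.ofReal_sub _ (risk_nonneg D h), ofReal_risk, ENNReal.ofReal_one, ← hone]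
    exact (ENNReal.add_sub_cancel_left
      ((genError_le_one D h).trans_lt ENNReal.one_lt_top).ne).symm
  rw [hsplit, hb, ← ofReal_risk, ← ENNReal.ofReal_mul (risk_nonneg D h),
    ← ENNReal.ofReal_add (mul_nonneg (risk_nonneg D h) (Real.exp_pos t).le)
      (sub_nonneg.2 (risk_le_one D h))]
  refine ENNReal.ofReal_le_ofReal ?_
  have := convexOn_exp.2 (Set.mem_univ t) (Set.mem_univ 0) (risk_nonneg D h)
    (sub_nonneg.2 (risk_le_one D h)) (by ring)
  simp only [smul_eq_mul, mul_zero, add_zero, Real.exp_zero, mul_one] at this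
  rwa [mul_comm t]

/-- The exponential moment of the deviation of `h` on the sample `S`. -/
noncomputable def devExp (D : PMF (ℕ × Bool)) (t : ℝ) (h : Hyp) (S : Sample) : ℝ≥0∞ :=
  (S.map fun z => ENNReal.ofReal (Real.exp (t * (risk D h - loss h z)))).prod

/-- The analogue of `devExp` where the true risk is replaced by the loss on a ghost sample;
a list of pairs is a sample together with its ghost sample. -/
noncomputable def ghostExp (t : ℝ) (h : Hyp) (P : List ((ℕ × Bool) × (ℕ × Bool))) : ℝ≥0∞ :=
  (P.map fun p => ENNReal.ofReal (Real.exp (t * (loss h p.2 - loss h p.1)))).prod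

/-- The weights of two independent draws. -/
noncomputable def pairWeight (D : PMF (ℕ × Bool)) (p : (ℕ × Bool) × (ℕ × Bool)) : ℝ≥0∞ :=
  D p.1 * D p.2

/-- Tonelli's theorem. -/
theorem Ex_tsum {α ι : Type*} (D : α → ℝ≥0∞) (m : ℕ) (F : ι → List α → ℝ≥0∞) :
    Ex D m (fun S => ∑' i, F i S) = ∑' i, Ex D m (F i) := by
  induction m generalizing F with
  | zero => rfl
  | succ m ih =>
    simp only [Ex, ih, ← ENNReal.tsum_mul_left]
    exact ENNReal.tsum_comm

/-- The contribution of a single example to the passage from `devExp` to `ghostExp`. -/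
theorem devExp_factor_le (D : PMF (ℕ × Bool)) (t : ℝ) (h : Hyp) (z : ℕ × Bool) :
    ENNReal.ofReal (Real.exp (t * (risk D h - loss h z))) ≤
      ∑' z', D z' * ENNReal.ofReal (Real.exp (t * (loss h z' - loss h z))) := by
  have hs : ∀ a : ℝ, ENNReal.ofReal (Real.exp (t * (a - loss h z))) =
      ENNReal.ofReal (Real.exp (t * a)) * ENNReal.ofReal (Real.exp (-(t * loss h z))) := by
    intro a
    rw [← ENNReal.ofReal_mul (Real.exp_pos _).le, ← Real.exp_add]
    ring_nf
  simp only [hs, ← mul_assoc, ENNReal.tsum_mul_right]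
  gcongr
  exact exp_risk_le D h t

/-- The true risk is replaced by the loss on a ghost sample, uniformly over the class. The
weights `c` make the induction on the sample size work. -/
theorem Ex_iSup_devExp_le (H : Set Hyp) (D : PMF (ℕ × Bool)) (t : ℝ) (m : ℕ)
    (c : Hyp → ℝ≥0∞) :
    Ex D m (fun S => ⨆ h ∈ H, c h * devExp D t h S) ≤
      Ex (pairWeight D) m (fun P => ⨆ h ∈ H, c h * ghostExp t h P) := by
  induction m generalizing c with
  | zero => simp [Ex, devExp, ghostExp]
  | succ m ih =>
    simp only [Ex]
    rw [ENNReal.tsum_prod' (α := ℕ × Bool) (β := ℕ × Bool)]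
    refine ENNReal.tsum_le_tsum fun z => ?_
    simp only [pairWeight, mul_assoc, ENNReal.tsum_mul_left]
    refine mul_le_mul_right ?_ _
    have h1 := ih fun h => c h * ENNReal.ofReal (Real.exp (t * (risk D h - loss h z)))
    simp only [devExp, ghostExp, List.map_cons, List.prod_cons] at h1 ⊢
    simp only [mul_assoc] at h1 ⊢
    refine h1.trans ?_
    simp only [← Ex_const_mul]
    rw [← Ex_tsum]
    refine Ex_mono _ _ fun P _ => ?_
    refine iSup₂_le fun h hh => ?_
    calc _ ≤ c h * ((∑' z', D z' * ENNReal.ofReal (Real.exp (t * (loss h z' - loss h z)))) *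
            ghostExp t h P) := by
          refine mul_le_mul_right (mul_le_mul_left ?_ _) _
          exact devExp_factor_le D t h z
      _ = ∑' z', D z' * (c h * (ENNReal.ofReal (Real.exp (t * (loss h z' - loss h z))) *
            ghostExp t h P)) := by
          rw [← ENNReal.tsum_mul_right, ← ENNReal.tsum_mul_left]
          refine tsum_congr fun z' => ?_
          ring
      _ ≤ _ := by
          refine ENNReal.tsum_le_tsum fun z' => mul_le_mul_right ?_ _
          exact le_iSup₂_of_le h hh le_rfl

/-- The average of `F` over all ways of swapping the components of some of the pairs. -/
noncomputable def swapAvg {α : Type*} : List (α × α) → (List (α × α) → ℝ≥0∞) → ℝ≥0∞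
  | [], F => F []
  | p :: P, F => 2⁻¹ * (swapAvg P (fun Q => F (p :: Q)) + swapAvg P (fun Q => F (p.swap :: Q)))

/-- A sample and its ghost sample are exchangeable. -/
theorem Ex_swapAvg (D : PMF (ℕ × Bool)) (m : ℕ)
    (F : List ((ℕ × Bool) × (ℕ × Bool)) → ℝ≥0∞) :
    Ex (pairWeight D) m (fun P => swapAvg P F) = Ex (pairWeight D) m F := by
  induction m generalizing F with
  | zero => rfl
  | succ m ih =>
    simp only [Ex, swapAvg, Ex_const_mul, Ex_add, ih]
    have hsw : ∑' p, pairWeight D p * Ex (pairWeight D) m (fun Q => F (p.swap :: Q)) =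
        ∑' p, pairWeight D p * Ex (pairWeight D) m (fun Q => F (p :: Q)) := by
      rw [← (Equiv.prodComm _ _).tsum_eq
        (fun p => pairWeight D p * Ex (pairWeight D) m (fun Q => F (p :: Q)))]
      refine tsum_congr fun p => ?_
      simp [pairWeight, mul_comm]
    simp only [mul_left_comm _ (2⁻¹ : ℝ≥0∞), mul_add, ENNReal.tsum_mul_left, ENNReal.tsum_add, hsw]
    rw [← mul_add, ← two_mul, ← mul_assoc, ENNReal.inv_mul_cancel (by norm_num) (by norm_num),
      one_mul]

/-- Swapping does not create new pairs, up to order, so only lists with pairs from `P` matter. -/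
theorem swapAvg_mono {α : Type*} {P : List (α × α)} {F G : List (α × α) → ℝ≥0∞}
    (h : ∀ Q, (∀ q ∈ Q, q ∈ P ∨ q.swap ∈ P) → F Q ≤ G Q) : swapAvg P F ≤ swapAvg P G := by
  induction P generalizing F G with
  | nil => exact h [] (by simp)
  | cons p P ih =>
    simp only [swapAvg]
    have hstep : ∀ p', (p' = p ∨ p'.swap = p) →
        swapAvg P (fun Q => F (p' :: Q)) ≤ swapAvg P (fun Q => G (p' :: Q)) := by
      intro p' hp'
      refine ih fun Q hQ => h _ fun q hq => ?_
      rcases List.mem_cons.1 hq with rfl | hq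
      · rcases hp' with h | h <;> simp [h]
      · rcases hQ q hq with h | h <;> simp [h]
    gcongr
    · exact hstep p (Or.inl rfl)
    · exact hstep p.swap (Or.inr p.swap_swap)

theorem swapAvg_sum {α ι : Type*} (s : Finset ι) (P : List (α × α))
    (F : ι → List (α × α) → ℝ≥0∞) :
    swapAvg P (fun Q => ∑ i ∈ s, F i Q) = ∑ i ∈ s, swapAvg P (F i) := by
  induction P generalizing F with
  | nil => rfl
  | cons p P ih => simp only [swapAvg, ih, ← Finset.sum_add_distrib, ← Finset.mul_sum]

theorem swapAvg_const_mul {α : Type*} (c : ℝ≥0∞) (P : List (α × α))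
    (F : List (α × α) → ℝ≥0∞) : swapAvg P (fun Q => c * F Q) = c * swapAvg P F := by
  induction P generalizing F with
  | nil => rfl
  | cons p P ih => simp only [swapAvg, ih, ← mul_add, mul_left_comm c]

theorem loss_sub_sq_le (h : Hyp) (z z' : ℕ × Bool) : (loss h z' - loss h z) ^ 2 ≤ 1 := by
  unfold loss
  split_ifs <;> norm_num

/-- Hoeffding's bound: each swap contributes a factor `cosh (± t) ≤ exp (t² / 2)` or `1`. -/
theorem swapAvg_ghostExp_le (t : ℝ) (h : Hyp) (P : List ((ℕ × Bool) × (ℕ × Bool))) :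
    swapAvg P (ghostExp t h) ≤ ENNReal.ofReal (Real.exp (t ^ 2 / 2)) ^ P.length := by
  induction P with
  | nil => simp [swapAvg, ghostExp]
  | cons p P ih =>
    have hc : ∀ q : (ℕ × Bool) × (ℕ × Bool), (fun Q => ghostExp t h (q :: Q)) = fun Q =>
        ENNReal.ofReal (Real.exp (t * (loss h q.2 - loss h q.1))) * ghostExp t h Q := fun q => by
      simp [ghostExp]
    simp only [swapAvg, hc, swapAvg_const_mul, ← add_mul, Prod.fst_swap, Prod.snd_swap]
    rw [← mul_assoc, List.length_cons, pow_succ, mul_comm (_ ^ P.length)]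
    refine mul_le_mul' ?_ ih
    rw [← ENNReal.ofReal_add (Real.exp_pos _).le (Real.exp_pos _).le,
      show (2 : ℝ≥0∞)⁻¹ = ENNReal.ofReal 2⁻¹ by
        rw [ENNReal.ofReal_inv_of_pos (by norm_num)]; norm_num,
      ← ENNReal.ofReal_mul (by norm_num)]
    refine ENNReal.ofReal_le_ofReal ?_
    set x := t * (loss h p.2 - loss h p.1) with hx
    have h1 : t * (loss h p.1 - loss h p.2) = -x := by rw [hx]; ring
    have h2 : 2⁻¹ * (Real.exp x + Real.exp (-x)) = Real.cosh x := by
      rw [Real.cosh_eq]; ring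
    rw [h1, h2]
    refine (Real.cosh_le_exp_half_sq x).trans (Real.exp_le_exp.2 ?_)
    have := loss_sub_sq_le h p.1 p.2
    rw [hx, mul_pow]
    nlinarith [sq_nonneg t]

/-- Sauer–Shelah: on a finite set of points the class is represented by polynomially many
hypotheses. -/
theorem exists_representatives {H : Set Hyp} {d : ℕ} (hd : VCDimAtMost H d) (X : Finset ℕ) :
    ∃ V : Finset Hyp, V.card ≤ (d + 1) * (X.card + 1) ^ d ∧
      ∀ h ∈ H, ∃ v ∈ V, ∀ x ∈ X, h x = v x := by
  classical
  set 𝒜 : Finset (Finset ℕ) :=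
    X.powerset.filter fun u => ∃ h ∈ H, (X.filter fun x => h x = true) = u with h𝒜
  have hsub : 𝒜.shatterer ⊆ (Finset.range (d + 1)).biUnion fun k => X.powersetCard k := by
    intro s hs
    rw [Finset.mem_shatterer] at hs
    have hsX : s ⊆ X := by
      obtain ⟨u, hu, hsu⟩ := hs (Finset.Subset.refl s)
      rw [h𝒜, Finset.mem_filter, Finset.mem_powerset] at hu
      rw [← hsu]
      exact Finset.inter_subset_right.trans hu.1
    have hcard : s.card ≤ d := by
      refine hd s fun g => ?_
      obtain ⟨u, hu, hsu⟩ := hs (Finset.filter_subset (fun x => g x = true) s)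
      rw [h𝒜, Finset.mem_filter] at hu
      obtain ⟨-, h, hh, rfl⟩ := hu
      refine ⟨h, hh, fun x hx => ?_⟩
      have := Finset.ext_iff.1 hsu x
      simp only [Finset.mem_inter, Finset.mem_filter, hx, hsX hx, true_and] at this
      exact Bool.eq_iff_iff.2 this
    simp only [Finset.mem_biUnion, Finset.mem_range, Finset.mem_powersetCard]
    exact ⟨s.card, by omega, hsX, rfl⟩
  refine ⟨𝒜.image fun u x => decide (x ∈ u), ?_, ?_⟩
  · calc _ ≤ 𝒜.card := Finset.card_image_le
      _ ≤ 𝒜.shatterer.card := Finset.card_le_card_shatterer 𝒜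
      _ ≤ _ := Finset.card_le_card hsub
      _ ≤ ∑ k ∈ Finset.range (d + 1), (X.powersetCard k).card := Finset.card_biUnion_le
      _ ≤ ∑ k ∈ Finset.range (d + 1), (X.card + 1) ^ d := by
          refine Finset.sum_le_sum fun k hk => ?_
          rw [Finset.card_powersetCard]
          rw [Finset.mem_range] at hk
          calc X.card.choose k ≤ X.card ^ k := Nat.choose_le_pow _ _
            _ ≤ (X.card + 1) ^ k := by gcongr; omega
            _ ≤ (X.card + 1) ^ d := by gcongr <;> omega
      _ = _ := by simp
  · intro h hh
    refine ⟨_, Finset.mem_image_of_mem _ (a := X.filter fun x => h x = true) ?_, ?_⟩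
    · rw [h𝒜, Finset.mem_filter, Finset.mem_powerset]
      exact ⟨Finset.filter_subset _ _, h, hh, rfl⟩
    · intro x hx
      simp [hx]

/-- After conditioning on the unordered pairs, only polynomially many hypotheses need to be
distinguished, so the supremum is bounded by a finite sum. -/
theorem swapAvg_iSup_le {H : Set Hyp} {d : ℕ} (hd : VCDimAtMost H d) (t : ℝ) (m : ℕ)
    (P : List ((ℕ × Bool) × (ℕ × Bool))) (hP : P.length = m) :
    swapAvg P (fun Q => ⨆ h ∈ H, ghostExp t h Q) ≤
      ((d + 1) * (2 * m + 1) ^ d : ℕ) * ENNReal.ofReal (Real.exp (t ^ 2 / 2)) ^ m := by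
  classical
  set X : Finset ℕ := (P.map fun p => p.1.1).toFinset ∪ (P.map fun p => p.2.1).toFinset with hX
  have hXc : X.card ≤ 2 * m := by
    have h1 := (P.map fun p => p.1.1).toFinset_card_le
    have h2 := (P.map fun p => p.2.1).toFinset_card_le
    have h3 : X.card ≤ (P.map fun p => p.1.1).toFinset.card +
        (P.map fun p => p.2.1).toFinset.card := Finset.card_union_le _ _
    rw [List.length_map, hP] at h1 h2
    omega
  have hX1 : ∀ p ∈ P, p.1.1 ∈ X ∧ p.2.1 ∈ X := by
    intro p hp
    rw [hX, Finset.mem_union, Finset.mem_union, List.mem_toFinset, List.mem_toFinset,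
      List.mem_toFinset, List.mem_toFinset]
    exact ⟨Or.inl (List.mem_map_of_mem (f := fun p => p.1.1) hp),
      Or.inr (List.mem_map_of_mem (f := fun p => p.2.1) hp)⟩
  obtain ⟨V, hVc, hV⟩ := exists_representatives hd X
  calc _ ≤ swapAvg P (fun Q => ∑ v ∈ V, ghostExp t v Q) := by
        refine swapAvg_mono fun Q hQ => iSup₂_le fun h hh => ?_
        obtain ⟨v, hv, hvh⟩ := hV h hh
        have heq : ghostExp t h Q = ghostExp t v Q := by
          unfold ghostExp
          congr 1
          refine List.map_congr_left fun q hq => ?_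
          have : q.1.1 ∈ X ∧ q.2.1 ∈ X := by
            rcases hQ q hq with h | h
            · exact hX1 q h
            · exact (hX1 _ h).symm
          simp only [loss, hvh _ this.1, hvh _ this.2]
        rw [heq]
        exact Finset.single_le_sum (f := fun v => ghostExp t v Q) (fun _ _ => zero_le) hv
    _ = ∑ v ∈ V, swapAvg P (ghostExp t v) := swapAvg_sum V P _
    _ ≤ ∑ v ∈ V, ENNReal.ofReal (Real.exp (t ^ 2 / 2)) ^ m :=
        Finset.sum_le_sum fun v _ => hP ▸ swapAvg_ghostExp_le t v P
    _ = V.card * ENNReal.ofReal (Real.exp (t ^ 2 / 2)) ^ m := by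
        rw [Finset.sum_const, nsmul_eq_mul]
    _ ≤ _ := by
        gcongr
        exact hVc.trans (by gcongr)

/-- The exponential moment of the largest deviation over a class of VC dimension at most `d`. -/
theorem Ex_iSup_devExp_bound {H : Set Hyp} {d : ℕ} (hd : VCDimAtMost H d)
    (D : PMF (ℕ × Bool)) (t : ℝ) (m : ℕ) :
    Ex D m (fun S => ⨆ h ∈ H, devExp D t h S) ≤
      ((d + 1) * (2 * m + 1) ^ d : ℕ) * ENNReal.ofReal (Real.exp (t ^ 2 / 2)) ^ m := by
  have h1 := Ex_iSup_devExp_le H D t m fun _ => 1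
  simp only [one_mul] at h1
  refine h1.trans ?_
  rw [← Ex_swapAvg]
  refine (Ex_mono _ _ fun P hP => swapAvg_iSup_le hd t m P hP).trans (le_of_eq ?_)
  refine Ex_const ?_ _ _
  rw [ENNReal.tsum_prod' (α := ℕ × Bool) (β := ℕ × Bool)]
  simp only [pairWeight, ENNReal.tsum_mul_left, D.tsum_coe, mul_one]

theorem devExp_eq (D : PMF (ℕ × Bool)) (t : ℝ) (h : Hyp) (S : Sample) :
    devExp D t h S =
      ENNReal.ofReal (Real.exp (t * (S.length * risk D h - mistakes h S))) := by
  induction S with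
  | nil => simp [devExp, mistakes]
  | cons z S ih =>
    rw [devExp, List.map_cons, List.prod_cons, ← devExp, ih,
      ← ENNReal.ofReal_mul (Real.exp_pos _).le, ← Real.exp_add]
    congr 2
    have : (mistakes h (z :: S) : ℝ) = mistakes h S + loss h z := by
      unfold mistakes loss
      by_cases hz : h z.1 = z.2 <;> simp [hz]
    rw [this, List.length_cons]
    push_cast
    ring

/-- The samples on which some `h ∈ H` has empirical error off its true error by more than `ε`,
in the direction given by the sign `s`. -/
def badSet (H : Set Hyp) (D : PMF (ℕ × Bool)) (ε s : ℝ) : Set Sample :=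
  {S | ∃ h ∈ H, ε * S.length < s * (S.length * risk D h - mistakes h S)}

/-- The probability of a large deviation for some `h ∈ H`. The hypothesis `s ^ 2 = 1` says that `s`
is a sign. -/
theorem Ex_badSet_le {H : Set Hyp} {d : ℕ} (hd : VCDimAtMost H d) (D : PMF (ℕ × Bool))
    {ε s : ℝ} (hε : 0 < ε) (hs : s ^ 2 = 1) (m : ℕ) :
    Ex D m ((badSet H D ε s).indicator 1) ≤
      ENNReal.ofReal ((d + 1) * (2 * m + 1) ^ d * Real.exp (-(m * ε ^ 2 / 2))) := by
  set c := ENNReal.ofReal (Real.exp (-(m * ε ^ 2))) with hc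
  -- Markov's inequality for the exponential moment at the optimal parameter `± ε`.
  have h1 : Ex D m ((badSet H D ε s).indicator 1) ≤
      Ex D m (fun S => c * ⨆ h ∈ H, devExp D (s * ε) h S) := by
    refine Ex_mono _ _ fun S hS => ?_
    by_cases hb : S ∈ badSet H D ε s
    · obtain ⟨h, hh, hlt⟩ := id hb
      rw [Set.indicator_of_mem hb, Pi.one_apply]
      calc (1 : ℝ≥0∞) ≤ c * devExp D (s * ε) h S := by
            rw [devExp_eq, hc, ← ENNReal.ofReal_mul (Real.exp_pos _).le, ← Real.exp_add,
              ← ENNReal.ofReal_one]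
            refine ENNReal.ofReal_le_ofReal (Real.one_le_exp ?_)
            rw [hS] at hlt ⊢
            nlinarith
        _ ≤ c * ⨆ h ∈ H, devExp D (s * ε) h S :=
          mul_le_mul_right (le_iSup₂ (f := fun h (_ : h ∈ H) => devExp D (s * ε) h S) h hh) c
    · simp [hb]
  refine h1.trans ?_
  rw [Ex_const_mul]
  refine (mul_le_mul_right (Ex_iSup_devExp_bound hd D (s * ε) m) _).trans (le_of_eq ?_)
  rw [mul_pow, hs, one_mul, ← ENNReal.ofReal_pow (Real.exp_pos _).le, ← Real.exp_nat_mul,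
    ← ENNReal.ofReal_natCast, ← ENNReal.ofReal_mul (by positivity), hc,
    ← ENNReal.ofReal_mul (Real.exp_pos _).le]
  congr 1
  rw [mul_left_comm, ← Real.exp_add]
  push_cast
  congr 2
  ring

/-- On a sample that is representative for `H`, an empirical risk minimizer is nearly optimal. -/
theorem genError_erm_le {H : Set Hyp} {A : Learner} {D : PMF (ℕ × Bool)} {n : ℕ} (hn : 0 < n)
    {S : Sample} (hS : 0 < S.length) (hAS : A S ∈ H)
    (hmin : ∀ h ∈ H, mistakes (A S) S ≤ mistakes h S)
    (h1 : S ∉ badSet H D (1 / (2 * n)) 1) (h2 : S ∉ badSet H D (1 / (2 * n)) (-1)) :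
    genError D (A S) ≤ (⨅ h ∈ H, genError D h) + (n : ℝ≥0∞)⁻¹ := by
  rw [← tsub_le_iff_right]
  refine le_iInf₂ fun h hh => ?_
  rw [tsub_le_iff_right]
  have hn' : (0 : ℝ) < n := by exact_mod_cast hn
  have e1 : (n : ℝ≥0∞)⁻¹ = ENNReal.ofReal (1 / n) := by
    rw [one_div, ENNReal.ofReal_inv_of_pos hn', ENNReal.ofReal_natCast]
  rw [← ofReal_risk, ← ofReal_risk, e1, ← ENNReal.ofReal_add (risk_nonneg D h) (by positivity)]
  refine ENNReal.ofReal_le_ofReal ?_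
  have hl : (0 : ℝ) < S.length := by exact_mod_cast hS
  have a1 : ¬ _ := fun hlt => h1 ⟨A S, hAS, hlt⟩
  have a2 : ¬ _ := fun hlt => h2 ⟨h, hh, hlt⟩
  rw [not_lt] at a1 a2
  have a3 : (mistakes (A S) S : ℝ) ≤ mistakes h S := by exact_mod_cast hmin h hh
  have e2 : (1 : ℝ) / n = 1 / (2 * n) + 1 / (2 * n) := by field_simp; ring
  rw [e2]
  refine le_of_mul_le_mul_left ?_ hl
  linarith

/-- An empirical risk minimizer satisfies the PAC inequality once the deviation bound with accuracy
`1 / (2 n)`, counted for both signs, is at most `1 / n`. -/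
theorem pac_of_erm {H : Set Hyp} {d : ℕ} (hd : VCDimAtMost H d) {A : Learner}
    (hA : ∀ S, A S ∈ H ∧ ∀ h ∈ H, mistakes (A S) S ≤ mistakes h S) {n m : ℕ} (hn : 0 < n)
    (hm : 0 < m)
    (hbound : 2 * ((d + 1) * (2 * m + 1) ^ d) * Real.exp (-(m / (8 * n ^ 2))) ≤ 1 / (n : ℝ)) :
    PACCondition A H n m := by
  intro D
  rw [samplePr_eq]
  set E : Set Sample := {S | genError D (A S) ≤ (⨅ h ∈ H, genError D h) + (n : ℝ≥0∞)⁻¹}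
  have hc := Ex_indicator_compl D m E
  have hn' : (0 : ℝ) < n := by exact_mod_cast hn
  have hε : (0 : ℝ) < 1 / (2 * n) := by positivity
  have hbad : Ex D m (Eᶜ.indicator 1) ≤ (n : ℝ≥0∞)⁻¹ := by
    calc Ex D m (Eᶜ.indicator 1)
        ≤ Ex D m (fun S => (badSet H D (1 / (2 * n)) 1).indicator 1 S +
            (badSet H D (1 / (2 * n)) (-1)).indicator 1 S) := by
          refine Ex_mono _ _ fun S hS => ?_
          by_cases h1 : S ∈ badSet H D (1 / (2 * n)) 1
          · rw [Set.indicator_of_mem h1]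
            exact (Set.indicator_le_self' (fun _ _ => zero_le) S).trans le_self_add
          by_cases h2 : S ∈ badSet H D (1 / (2 * n)) (-1)
          · rw [Set.indicator_of_mem h2]
            exact (Set.indicator_le_self' (fun _ _ => zero_le) S).trans le_add_self
          have : S ∈ E := genError_erm_le hn (by omega) (hA S).1 (hA S).2 h1 h2
          simp [this]
      _ ≤ ENNReal.ofReal ((d + 1) * (2 * m + 1) ^ d * Real.exp (-(m * (1 / (2 * n)) ^ 2 / 2))) +
          ENNReal.ofReal ((d + 1) * (2 * m + 1) ^ d * Real.exp (-(m * (1 / (2 * n)) ^ 2 / 2))) := by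
          rw [Ex_add]
          exact add_le_add (Ex_badSet_le hd D hε (by norm_num) m)
            (Ex_badSet_le hd D hε (by norm_num) m)
      _ ≤ ENNReal.ofReal (1 / n) := by
          rw [← ENNReal.ofReal_add (by positivity) (by positivity)]
          refine ENNReal.ofReal_le_ofReal (le_trans (le_of_eq ?_) hbound)
          have : (m : ℝ) * (1 / (2 * n)) ^ 2 / 2 = m / (8 * n ^ 2) := by field_simp; norm_num
          rw [this]; ring
      _ = _ := by rw [one_div, ENNReal.ofReal_inv_of_pos hn', ENNReal.ofReal_natCast]
  rw [tsub_le_iff_right, ← hc]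
  gcongr

/-- A sample size of order `n² log n` beats the polynomial growth of the class. -/
theorem exists_rate (d : ℕ) : ∃ C : ℝ, 0 < C ∧ ∀ n : ℕ, 2 ≤ n → ∀ m : ℕ,
    C * (n : ℝ) ^ 2 * Real.log n ≤ m →
    2 * ((d + 1) * (2 * m + 1) ^ d) * Real.exp (-(m / (8 * n ^ 2))) ≤ 1 / (n : ℝ) := by
  set K : ℝ := 2 * (d + 1) * 33 ^ d * (d.factorial * Real.exp 1) with hK
  obtain ⟨L, hL⟩ := pow_unbounded_of_one_lt K (one_lt_two : (1 : ℝ) < 2)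
  refine ⟨16 * (2 * d + 1 + L : ℕ), by positivity, fun n hn m hm => ?_⟩
  have hn2 : (2 : ℝ) ≤ n := by exact_mod_cast hn
  have hn0 : (0 : ℝ) < n := by linarith
  -- With `m = 16 n² u` the bound is `exp (-u) * exp (-u)` times a polynomial in `n` and `u`: one
  -- factor absorbs the power of `u`, and the other, as `u ≥ (2 d + 1 + L) log n`, that of `n`.
  set u : ℝ := m / (16 * n ^ 2) with hu
  have hu0 : 0 ≤ u := by positivity
  have hmu : (m : ℝ) = 16 * n ^ 2 * u := by rw [hu]; field_simp
  have hlog : ((2 * d + 1 + L : ℕ) : ℝ) * Real.log n ≤ u := by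
    rw [hu, le_div_iff₀ (by positivity)]
    linarith
  have e1 : Real.exp (-(m / (8 * n ^ 2))) = Real.exp (-u) * Real.exp (-u) := by
    rw [← Real.exp_add, hmu]
    congr 1
    field_simp
    ring
  have e2 : Real.exp (-u) ≤ 1 / (n : ℝ) ^ (2 * d + 1 + L) := by
    rw [Real.exp_neg, ← one_div]
    refine one_div_le_one_div_of_le (by positivity) ?_
    rw [← Real.exp_log (pow_pos hn0 _), Real.log_pow]
    exact Real.exp_le_exp.2 hlog
  have e3 : (2 * (m : ℝ) + 1) ^ d ≤ 33 ^ d * (n : ℝ) ^ (2 * d) * (u + 1) ^ d := by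
    rw [pow_mul, ← mul_pow, ← mul_pow]
    refine pow_le_pow_left₀ (by positivity) ?_ d
    rw [hmu]
    nlinarith [mul_nonneg (sq_nonneg (n : ℝ)) hu0]
  have e4 : (u + 1) ^ d ≤ d.factorial * Real.exp 1 * Real.exp u := by
    have h := Real.pow_div_factorial_le_exp (u + 1) (by linarith) d
    rw [div_le_iff₀ (by positivity)] at h
    rw [mul_assoc, ← Real.exp_add, add_comm 1 u]
    linarith
  have e5 : Real.exp u * Real.exp (-u) = 1 := by rw [← Real.exp_add]; simp
  have hKL : K ≤ (n : ℝ) ^ L := hL.le.trans (pow_le_pow_left₀ (by norm_num) hn2 L)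
  calc 2 * ((d + 1) * (2 * (m : ℝ) + 1) ^ d) * Real.exp (-(m / (8 * n ^ 2)))
      ≤ 2 * ((d + 1) * (33 ^ d * (n : ℝ) ^ (2 * d) *
          (d.factorial * Real.exp 1 * Real.exp u))) * (Real.exp (-u) * Real.exp (-u)) := by
        rw [e1]
        gcongr
        exact e3.trans (by gcongr)
    _ = K * (n : ℝ) ^ (2 * d) * (Real.exp u * Real.exp (-u)) * Real.exp (-u) := by
        rw [hK]; ring
    _ ≤ (n : ℝ) ^ L * (n : ℝ) ^ (2 * d) * 1 * (1 / (n : ℝ) ^ (2 * d + 1 + L)) := by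
        rw [e5]
        gcongr
    _ = 1 / n := by
        rw [pow_add, pow_add]
        field_simp

end CPAC

/-! ### Conclusion -/

/-- Every CPAC learnable class `H` is contained in a properly CPAC
learnable class `Hhat` that is PAC learned by a computable proper learner whose sample
complexity w.r.t. `Hhat` is `O(n² log n)`. -/
theorem subset_properCPAC_with_poly_sample_complexity (H : Set Hyp)
    (hH : CPACLearnable H) :
    ∃ Hhat : Set Hyp, H ⊆ Hhat ∧
      ∃ A : Learner, ComputableLearner A ∧ ProperFor A Hhat ∧ PACLearns A Hhat ∧
        ∃ C : ℝ, ∀ n : ℕ, 2 ≤ n →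
          (sampleComplexity A Hhat n : ℝ) ≤ C * (n : ℝ) ^ 2 * Real.log n := by
  obtain ⟨N, w, hw, hwit⟩ := CPAC.exists_witness hH
  obtain ⟨C, hC, hrate⟩ := CPAC.exists_rate N
  have hspec := CPAC.erm_spec N w
  have hpac : ∀ n : ℕ, 2 ≤ n → ∀ m ≥ ⌈C * (n : ℝ) ^ 2 * Real.log n⌉₊,
      PACCondition (CPAC.erm N w) (CPAC.hat N w) n m := by
    intro n hn m hm
    have hn1 : (1 : ℝ) < n := by exact_mod_cast hn
    have hpos : 0 < C * (n : ℝ) ^ 2 * Real.log n :=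
      mul_pos (mul_pos hC (by positivity)) (Real.log_pos hn1)
    have hm0 : 0 < m := lt_of_lt_of_le (Nat.ceil_pos.2 hpos) hm
    exact CPAC.pac_of_erm (CPAC.hat_vc N w) hspec (by omega) hm0
      (hrate n hn m ((Nat.le_ceil _).trans (by exact_mod_cast hm)))
  refine ⟨CPAC.hat N w, fun h hh M _ xs _ _ => hwit h hh xs, CPAC.erm N w,
    CPAC.computable_erm N hw, fun S => (hspec S).1, fun n => ?_, ?_⟩
  · rcases Nat.lt_or_ge n 2 with hn | hn
    · -- For `n ≤ 1` the required probability `1 - 1/n` is zero.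
      refine ⟨0, fun m _ D => ?_⟩
      interval_cases n <;> simp
    · exact ⟨_, hpac n hn⟩
  · -- The rounding up is absorbed since `n² log n ≥ 1`.
    refine ⟨C + 1, fun n hn => ?_⟩
    have hle : sampleComplexity (CPAC.erm N w) (CPAC.hat N w) n ≤
        ⌈C * (n : ℝ) ^ 2 * Real.log n⌉₊ := Nat.sInf_le (hpac n hn)
    have hn2 : (2 : ℝ) ≤ n := by exact_mod_cast hn
    have hlog : (1 / 2 : ℝ) ≤ Real.log n := by
      have h1 := Real.log_le_log (by norm_num) hn2
      have h2 := Real.log_two_gt_d9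
      linarith
    have hone : 1 ≤ (n : ℝ) ^ 2 * Real.log n := by nlinarith
    have hceil := Nat.ceil_lt_add_one
      (show 0 ≤ C * (n : ℝ) ^ 2 * Real.log n by positivity)
    calc (sampleComplexity (CPAC.erm N w) (CPAC.hat N w) n : ℝ)
        ≤ ⌈C * (n : ℝ) ^ 2 * Real.log n⌉₊ := by exact_mod_cast hle
      _ ≤ C * (n : ℝ) ^ 2 * Real.log n + 1 := hceil.le
      _ ≤ (C + 1) * (n : ℝ) ^ 2 * Real.log n := by linarith
end

section
/- A hypothesis class 𝓗 ⊆ {0,1}^ℕ is properly CPAC learnable if and only if its VC dimension is finite and it has a computable asymptotic ERM. -/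
/-!
A proper PAC learner `A` forces finite VC dimension by the no-free-lunch argument
(`finiteVCDim_of_pacLearns`): on a large shattered set with a uniformly random labeling, the label
of each unseen point is guessed wrongly with probability one half. It also yields a computable
asymptotic ERM (`isAsymptoticERM_bestTuple`): given `S` of length `m`, run `A` on all `m`-tuples
of entries of `S` and keep the output with the fewest errors on `S`. The generalization error for
the uniform distribution over `S` is the empirical error on `S`, so the PAC inequality says that
most tuples, hence the best one, are `1/n`-optimal as soon as `m` is large. Taking tuples of the
same length as `S` avoids having to compute the sample complexity.

Conversely, an asymptotic ERM for a class of finite VC dimension is a PAC learner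
(`pacLearns_of_asymptoticERM`) by uniform convergence. The deviation of the chosen hypothesis is
controlled through its exponential moment (`iidExp_deviation_le`): convexity replaces the true
risk by the empirical risk on a second sample, exchanging the two samples entry by entry
symmetrizes, and for a fixed double sample there are only polynomially many traces
(`hasTraces_of_vcDimAtMost`, from Pajor's form of the Sauer–Shelah lemma), each contributing a
product of hyperbolic cosines.

Expectations over i.i.d. samples are nested sums with values in `ℝ≥0∞` (`iidExp`), which makes all
interchanges of sums unconditional.
-/

open Filter
open scoped ENNReal

/-! ### Brute-force minimization is computable -/

section Computability

variable {α β σ : Type*} [Primcodable α] [Primcodable β] [Primcodable σ]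

theorem computable_foldl {f : α → List β} {g : α → σ} {h : α → σ × β → σ}
    (hf : Computable f) (hg : Computable g) (hh : Computable₂ h) :
    Computable fun a => (f a).foldl (fun s b => h a (s, b)) (g a) := by
  -- primitive recursion on the number of list entries consumed so far
  let step : α → ℕ × σ → σ := fun a q =>
    Option.casesOn ((f a)[q.1]?) q.2 (fun b => h a (q.2, b))
  have hstep : Computable₂ step := by
    refine Computable.option_casesOn
      (Computable.list_getElem?.comp (hf.comp Computable.fst)
        (Computable.fst.comp Computable.snd)) (Computable.snd.comp Computable.snd) ?_
    exact hh.comp (Computable.fst.comp Computable.fst)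
      (Computable.pair (Computable.snd.comp (Computable.snd.comp Computable.fst)) Computable.snd)
  have key := Computable.nat_rec (Computable.list_length.comp hf) hg hstep
  refine key.of_eq fun a => ?_
  have : ∀ n, n ≤ (f a).length →
      (Nat.rec (g a) (fun y IH => step a (y, IH)) n : σ)
        = ((f a).take n).foldl (fun s b => h a (s, b)) (g a) := by
    intro n
    induction n with
    | zero => intro _; simp
    | succ n ih =>
      intro hn
      have hn' : n < (f a).length := hn
      simp only [ih hn'.le]
      rw [List.take_add_one, List.foldl_append]
      simp [step, hn']
  simpa using this _ le_rfl

end Computability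

/-- The number of errors of `h` on the sample `S`. -/
def errCount (S : Sample) (h : Hyp) : ℕ := S.countP fun p => h p.1 != p.2

theorem computable_errCount {A : Learner} (hA : ComputableLearner A) :
    Computable fun q : Sample × Sample => errCount q.1 (A q.2) := by
  have h := computable_foldl (α := Sample × Sample) (β := ℕ × Bool) (σ := ℕ)
    (f := fun q => q.1) (g := fun _ => 0)
    (h := fun q r => bif xor (A q.2 r.2.1) r.2.2 then r.1 + 1 else r.1)
    Computable.fst (Computable.const 0) (by
      have hx : Computable fun z : (Sample × Sample) × (ℕ × (ℕ × Bool)) =>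
          A z.1.2 z.2.2.1 :=
        Computable₂.comp hA (Computable.snd.comp Computable.fst)
          (Computable.fst.comp (Computable.snd.comp Computable.snd))
      refine Computable.cond ?_ ?_ ?_
      · exact Computable₂.comp (Primrec.dom_bool₂ Bool.xor).to_comp hx
          (Computable.snd.comp (Computable.snd.comp Computable.snd))
      · exact Computable.succ.comp (Computable.fst.comp Computable.snd)
      · exact Computable.fst.comp Computable.snd)
  refine h.of_eq fun q => ?_
  have : ∀ (S : Sample) (k : ℕ),
      S.foldl (fun s b => bif xor (A q.2 b.1) b.2 then s + 1 else s) k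
        = k + errCount S (A q.2) := by
    intro S
    induction S with
    | nil => intro k; simp [errCount]
    | cons p S ih =>
      intro k
      rw [List.foldl_cons, ih]
      cases h1 : A q.2 p.1 <;> cases h2 : p.2 <;> simp [errCount, h1, h2] <;> omega
  simpa using this q.1 0

/-- All lists of length `k` with entries from `S`. -/
def tuples (S : Sample) : ℕ → List Sample
  | 0 => [[]]
  | k + 1 => (tuples S k).flatMap fun T => S.map fun p => p :: T

theorem mem_tuples (S : Sample) : ∀ (k : ℕ) (T : Sample), T.length = k → (∀ p ∈ T, p ∈ S) →
    T ∈ tuples S k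
  | 0, T, hT, _ => by simp [tuples, List.length_eq_zero_iff.1 hT]
  | k + 1, [], hT, _ => by simp at hT
  | k + 1, p :: T, hT, h => by
    simp only [tuples, List.mem_flatMap, List.mem_map]
    exact ⟨T, mem_tuples S k T (by simpa using hT) (fun q hq => h q (by simp [hq])), p,
      h p (by simp), rfl⟩

theorem primrec_tuples : Primrec fun S : Sample => tuples S S.length := by
  have h : Primrec fun S : Sample =>
      (Nat.rec [[]] (fun _ (L : List Sample) => L.flatMap fun T => S.map fun p => p :: T)
        S.length : List Sample) := by
    refine Primrec.nat_rec' Primrec.list_length (Primrec.const ([[]] : List Sample))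
      (h := fun S q => q.2.flatMap fun T => S.map fun p => p :: T) ?_
    refine Primrec.list_flatMap (Primrec.snd.comp Primrec.snd) ?_
    refine Primrec.list_map (Primrec.fst.comp Primrec.fst) ?_
    exact Primrec.list_cons.comp Primrec.snd (Primrec.snd.comp Primrec.fst)
  refine h.of_eq fun S => ?_
  generalize S.length = k
  induction k with
  | zero => rfl
  | succ k ih => simp only [tuples, ih]

/-- Among the lists `T` of length `|S|` with entries from `S` (and `S` itself), one for which
`A T` has the fewest errors on `S`. -/
def bestTuple (A : Learner) (S : Sample) : Sample :=
  (tuples S S.length).foldl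
    (fun B T => bif decide (errCount S (A T) < errCount S (A B)) then T else B) S

theorem computable_bestTuple {A : Learner} (hA : ComputableLearner A) :
    Computable (bestTuple A) := by
  refine computable_foldl (α := Sample) (β := Sample) (σ := Sample)
    (f := fun S => tuples S S.length) (g := fun S => S)
    (h := fun S r => bif decide (errCount S (A r.2) < errCount S (A r.1)) then r.2 else r.1)
    primrec_tuples.to_comp Computable.id ?_
  have hlt : Computable₂ fun a b : ℕ => decide (a < b) :=
    (Primrec.nat_lt.decide).to_comp
  have hc := computable_errCount hA
  refine Computable.cond ?_ (Computable.snd.comp Computable.snd)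
    (Computable.fst.comp Computable.snd)
  refine hlt.comp ?_ ?_
  · exact hc.comp (Computable.pair Computable.fst (Computable.snd.comp Computable.snd))
  · exact hc.comp (Computable.pair Computable.fst (Computable.fst.comp Computable.snd))

theorem errCount_bestTuple_le (A : Learner) (S : Sample) :
    ∀ T ∈ tuples S S.length, errCount S (A (bestTuple A S)) ≤ errCount S (A T) := by
  have key : ∀ (L : List Sample) (B : Sample),
      (∀ T ∈ B :: L, errCount S (A (L.foldl
        (fun B T => bif decide (errCount S (A T) < errCount S (A B)) then T else B) B))
          ≤ errCount S (A T)) := by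
    intro L
    induction L with
    | nil => intro B T hT; simp at hT; simp [hT]
    | cons U L ih =>
      intro B T hT
      rw [List.foldl_cons]
      have h1 := ih (bif decide (errCount S (A U) < errCount S (A B)) then U else B)
      simp only [List.mem_cons] at hT
      have h0 := h1 _ (List.mem_cons_self)
      by_cases hlt : errCount S (A U) < errCount S (A B)
      · simp only [hlt, decide_true, cond_true] at h0 h1 ⊢
        rcases hT with rfl | rfl | hT
        · omega
        · exact h0
        · exact h1 T (List.mem_cons_of_mem _ hT)
      · simp only [hlt, decide_false, cond_false] at h0 h1 ⊢
        rcases hT with rfl | rfl | hT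
        · exact h0
        · omega
        · exact h1 T (List.mem_cons_of_mem _ hT)
  exact fun T hT => key _ S T (List.mem_cons_of_mem _ hT)

/-! ### Expectations over i.i.d. lists -/

section IidExp

variable {α β : Type*}

/-- The expectation of `F` over lists of `m` independent draws from `D`, by recursion on `m`. -/
noncomputable def iidExp (D : PMF α) : ℕ → (List α → ℝ≥0∞) → ℝ≥0∞
  | 0, F => F []
  | m + 1, F => ∑' p, D p * iidExp D m fun S => F (p :: S)

theorem samplePr_eq_iidExp (D : PMF (ℕ × Bool)) (m : ℕ) (E : Set Sample) :
    samplePr D m E = iidExp D m (E.indicator 1) := by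
  unfold samplePr
  induction m generalizing E with
  | zero =>
    classical
    simp [iidPMF, iidExp, PMF.toOuterMeasure_pure_apply, Set.indicator_apply]
  | succ m ih =>
    simp only [iidPMF, iidExp, PMF.toOuterMeasure_bind_apply, PMF.toOuterMeasure_map_apply, ih]
    rfl

theorem iidExp_mono (D : PMF α) (m : ℕ) {F G : List α → ℝ≥0∞}
    (h : ∀ S, S.length = m → (∀ z ∈ S, D z ≠ 0) → F S ≤ G S) :
    iidExp D m F ≤ iidExp D m G := by
  induction m generalizing F G with
  | zero => exact h [] rfl (by simp)
  | succ m ih =>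
    refine ENNReal.tsum_le_tsum fun p => ?_
    by_cases hp : D p = 0
    · simp [hp]
    · refine mul_le_mul_right (ih fun S hS hz => h (p :: S) (by simp [hS]) ?_) _
      simpa [hp] using hz

theorem iidExp_tsum (D : PMF α) (m : ℕ) {ι : Type*} (F : ι → List α → ℝ≥0∞) :
    iidExp D m (fun S => ∑' i, F i S) = ∑' i, iidExp D m (F i) := by
  induction m generalizing F with
  | zero => rfl
  | succ m ih =>
    simp only [iidExp, ih]
    rw [ENNReal.tsum_comm]
    simp only [ENNReal.tsum_mul_left]

theorem iidExp_sum (D : PMF α) (m : ℕ) {ι : Type*} (s : Finset ι) (F : ι → List α → ℝ≥0∞) :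
    iidExp D m (fun S => ∑ i ∈ s, F i S) = ∑ i ∈ s, iidExp D m (F i) := by
  have := iidExp_tsum D m (ι := s) (fun i => F i)
  simp only [tsum_fintype] at this
  rw [← Finset.sum_coe_sort s (fun i => iidExp D m (F i)), ← this]
  congr 1
  funext S
  exact (Finset.sum_coe_sort s (fun i => F i S)).symm

theorem iidExp_add (D : PMF α) (m : ℕ) (F G : List α → ℝ≥0∞) :
    iidExp D m (fun S => F S + G S) = iidExp D m F + iidExp D m G := by
  have := iidExp_sum D m (Finset.univ : Finset Bool) (fun b => bif b then F else G)
  simpa using this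

theorem iidExp_const_mul (D : PMF α) (m : ℕ) (c : ℝ≥0∞) (F : List α → ℝ≥0∞) :
    iidExp D m (fun S => c * F S) = c * iidExp D m F := by
  induction m generalizing F with
  | zero => rfl
  | succ m ih =>
    simp only [iidExp, ih, ← ENNReal.tsum_mul_left]
    exact tsum_congr fun p => by ring

theorem iidExp_const (D : PMF α) (m : ℕ) (c : ℝ≥0∞) : iidExp D m (fun _ => c) = c := by
  induction m with
  | zero => rfl
  | succ m ih => simp [iidExp, ih, ENNReal.tsum_mul_right, D.tsum_coe]

theorem iidExp_prod (D : PMF α) (m : ℕ) (f : α → ℝ≥0∞) :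
    iidExp D m (fun S => (S.map f).prod) = (∑' q, D q * f q) ^ m := by
  induction m with
  | zero => simp [iidExp]
  | succ m ih =>
    simp only [iidExp, List.map_cons, List.prod_cons, iidExp_const_mul, ih]
    rw [pow_succ', ← ENNReal.tsum_mul_right]
    exact tsum_congr fun p => by ring

theorem tsum_map_mul (D : PMF α) (φ : α → β) (G : β → ℝ≥0∞) :
    ∑' b, (D.map φ) b * G b = ∑' a, D a * G (φ a) := by
  classical
  simp only [PMF.map_apply, ← ENNReal.tsum_mul_right]
  rw [ENNReal.tsum_comm]
  refine tsum_congr fun a => ?_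
  rw [tsum_eq_single (φ a) (fun b hb => by simp [hb])]
  simp

theorem iidExp_map (D : PMF α) (φ : α → β) (m : ℕ) (F : List β → ℝ≥0∞) :
    iidExp (D.map φ) m F = iidExp D m fun S => F (S.map φ) := by
  induction m generalizing F with
  | zero => rfl
  | succ m ih => simp only [iidExp, ih, List.map_cons]; exact tsum_map_mul D φ _

theorem iidExp_indicator_add_compl (D : PMF α) (m : ℕ) (E : Set (List α)) :
    iidExp D m (E.indicator 1) + iidExp D m (Eᶜ.indicator 1) = 1 := by
  rw [← iidExp_add, ← iidExp_const D m 1]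
  congr 1
  funext S
  exact congrFun (Set.indicator_self_add_compl E (1 : List α → ℝ≥0∞)) S

/-- Passing from an event of probability at least `1 - c` to its complement. -/
theorem iidExp_compl_le (D : PMF α) (m : ℕ) (E : Set (List α)) {c : ℝ≥0∞}
    (h : 1 - c ≤ iidExp D m (E.indicator 1)) : iidExp D m (Eᶜ.indicator 1) ≤ c := by
  have h1 := iidExp_indicator_add_compl D m E
  have hfin : iidExp D m (E.indicator 1) ≠ ⊤ := by
    intro h'; simp [h'] at h1
  have h2 : iidExp D m (Eᶜ.indicator 1) = 1 - iidExp D m (E.indicator 1) := by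
    rw [← h1]; exact (ENNReal.add_sub_cancel_left hfin).symm
  rw [h2]
  exact tsub_le_iff_right.2 (by rw [add_comm]; exact tsub_le_iff_right.1 h)

theorem le_iidExp_of_compl_le (D : PMF α) (m : ℕ) (E : Set (List α)) {c : ℝ≥0∞}
    (h : iidExp D m (Eᶜ.indicator 1) ≤ c) : 1 - c ≤ iidExp D m (E.indicator 1) := by
  rw [tsub_le_iff_right, ← iidExp_indicator_add_compl D m E]
  exact add_le_add le_rfl h

end IidExp

/-! ### From a proper PAC learner to an asymptotic ERM -/

/-- The uniform distribution over the entries of a nonempty sample, counted with multiplicity. -/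
noncomputable def uniformOnSample (S : Sample) (hS : S ≠ []) : PMF (ℕ × Bool) :=
  haveI : NeZero S.length := ⟨by simpa using hS⟩
  (PMF.uniformOfFintype (Fin S.length)).map S.get

theorem countP_eq_sum (h : Hyp) : ∀ S : Sample, S.countP (fun p => h p.1 != p.2)
    = ∑ i : Fin S.length, if h (S.get i).1 ≠ (S.get i).2 then 1 else 0 := by
  intro S
  induction S with
  | nil => simp
  | cons p S ih =>
    rw [List.countP_cons, ih]
    by_cases hp : h p.1 = p.2 <;> simp [Fin.sum_univ_succ, hp, add_comm]

theorem genError_uniformOnSample (S : Sample) (hS : S ≠ []) (h : Hyp) :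
    genError (uniformOnSample S hS) h = empError S h := by
  unfold genError uniformOnSample empError
  have : NeZero S.length := ⟨by simpa using hS⟩
  classical
  rw [PMF.toOuterMeasure_map_apply, PMF.toOuterMeasure_uniformOfFintype_apply, Fintype.card_fin]
  congr 2
  rw [countP_eq_sum, Fintype.card_subtype, Finset.card_filter]
  refine Finset.sum_congr rfl fun i _ => ?_
  split_ifs <;> simp_all

theorem mem_of_uniformOnSample_ne_zero {S : Sample} {hS : S ≠ []} {p : ℕ × Bool}
    (hp : uniformOnSample S hS p ≠ 0) : p ∈ S := by
  have : NeZero S.length := ⟨by simpa using hS⟩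
  rw [← PMF.mem_support_iff] at hp
  simp only [uniformOnSample, PMF.mem_support_map_iff] at hp
  obtain ⟨i, -, rfl⟩ := hp
  exact S.get_mem i

theorem empError_le_one (S : Sample) (h : Hyp) : empError S h ≤ 1 := by
  refine ENNReal.div_le_of_le_mul ?_
  rw [one_mul]
  exact_mod_cast List.countP_le_length

theorem exists_large_inv_le {c : ℝ≥0∞} (hc : 0 < c) (N : ℕ) :
    ∃ n : ℕ, N ≤ n ∧ (n : ℝ≥0∞)⁻¹ ≤ c := by
  obtain ⟨n, hn⟩ := ENNReal.exists_inv_nat_lt hc.ne'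
  refine ⟨n + N, by omega, le_trans ?_ hn.le⟩
  exact ENNReal.inv_le_inv.2 (by exact_mod_cast Nat.le_add_right n N)

/-- Running a proper PAC learner on all `|S|`-tuples drawn from `S`, and keeping the output with
the fewest errors on `S`, is an asymptotic ERM: the PAC guarantee for the uniform distribution
over `S` makes at least one tuple good. -/
theorem isAsymptoticERM_bestTuple {A : Learner} {H : Set Hyp} (hprop : ProperFor A H)
    (hpac : PACLearns A H) : IsAsymptoticERM (fun S => A (bestTuple A S)) H := by
  refine ⟨fun S => hprop _, fun m => ⨆ (S : Sample) (_ : S.length = m),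
    empError S (A (bestTuple A S)) - ⨅ h ∈ H, empError S h, ?_, ?_, ?_⟩
  · exact fun m => iSup₂_le fun S _ => tsub_le_self.trans (empError_le_one _ _)
  · rw [ENNReal.tendsto_atTop_zero]
    intro c hc
    obtain ⟨n, hn2, hnc⟩ := exists_large_inv_le hc 2
    obtain ⟨m₀, hm₀⟩ := hpac n
    refine ⟨max m₀ 1, fun m hm => iSup₂_le fun S hSm => ?_⟩
    have hS : S ≠ [] := by rintro rfl; simp at hSm; omega
    have hcond := hm₀ m (le_trans (le_max_left _ _) hm) (uniformOnSample S hS)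
    rw [samplePr_eq_iidExp] at hcond
    simp only [genError_uniformOnSample] at hcond
    -- a good tuple exists, as the good event has positive probability
    obtain ⟨T, hTm, hTS, hT⟩ : ∃ T : Sample, T.length = m ∧ (∀ p ∈ T, p ∈ S) ∧
        empError S (A T) ≤ (⨅ h ∈ H, empError S h) + (n : ℝ≥0∞)⁻¹ := by
      by_contra! hcon
      have h0 := iidExp_mono (uniformOnSample S hS) m
        (F := Set.indicator {T | empError S (A T) ≤ (⨅ h ∈ H, empError S h) + (n : ℝ≥0∞)⁻¹} 1)
        (G := fun _ => 0) (fun T hT hz => by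
          rw [Set.indicator_of_notMem]
          simpa using hcon T hT fun p hp => mem_of_uniformOnSample_ne_zero (hz p hp))
      rw [iidExp_const] at h0
      have h1 := hcond.trans h0
      rw [nonpos_iff_eq_zero, tsub_eq_zero_iff_le, ENNReal.one_le_inv] at h1
      have : n ≤ 1 := by exact_mod_cast h1
      omega
    have hle : empError S (A (bestTuple A S)) ≤ empError S (A T) := by
      refine ENNReal.div_le_div_right ?_ _
      exact_mod_cast errCount_bestTuple_le A S T
        (mem_tuples S _ T (hTm.trans hSm.symm) hTS)
    rw [tsub_le_iff_left]
    exact hle.trans (hT.trans (add_le_add le_rfl hnc))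
  · intro S
    rw [← tsub_le_iff_left]
    exact le_iSup₂ (f := fun (T : Sample) (_ : T.length = S.length) =>
      empError T (A (bestTuple A T)) - ⨅ h ∈ H, empError T h) S rfl

/-! ### PAC learnability forces finite VC dimension -/

section NoFreeLunch

theorem genError_le_one (D : PMF (ℕ × Bool)) (h : Hyp) : genError D h ≤ 1 := by
  rw [genError, PMF.toOuterMeasure_apply, ← D.tsum_coe]
  exact ENNReal.tsum_le_tsum fun p => Set.indicator_le_self _ _ p

theorem iidExp_genError_le {A : Learner} {H : Set Hyp} {n m : ℕ} (hc : PACCondition A H n m)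
    (D : PMF (ℕ × Bool)) (h0 : ⨅ h ∈ H, genError D h = 0) :
    iidExp D m (fun S => genError D (A S)) ≤ 2 * (n : ℝ≥0∞)⁻¹ := by
  have h1 := hc D
  rw [samplePr_eq_iidExp, h0, zero_add] at h1
  have h2 := iidExp_compl_le D m _ h1
  set E : Set Sample := {S | genError D (A S) ≤ (n : ℝ≥0∞)⁻¹} with hE
  refine (iidExp_mono D m (G := fun S => (n : ℝ≥0∞)⁻¹ + Eᶜ.indicator 1 S) ?_).trans ?_
  · intro S _ _
    by_cases hS : S ∈ E
    · exact le_add_right hS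
    · rw [Set.indicator_of_mem (show S ∈ Eᶜ from hS)]
      exact le_add_left (genError_le_one D _)
  · rw [iidExp_add, iidExp_const, two_mul]
    exact add_le_add le_rfl h2

variable {s : Finset ℕ}

/-- Attach to a point of `s` its label under `g`. -/
def labelled (g : s → Bool) (i : s) : ℕ × Bool := (i, g i)

/-- For a training point list `xs` and a point `i` not in it, exactly half of the labelings `g`
make the output of `A` err at `i`: flip the label of `i`. -/
theorem two_mul_card_err (A : Learner) (xs : List s) {i : s} (hi : i ∉ xs) :
    2 * ∑ g : s → Bool, (if A (xs.map (labelled g)) i ≠ g i then 1 else 0)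
      = Fintype.card (s → Bool) := by
  let flip : (s → Bool) → (s → Bool) := fun g => Function.update g i (!g i)
  have hinv : Function.Involutive flip := by
    intro g
    simp [flip]
  rw [two_mul]
  nth_rw 2 [← Equiv.sum_comp hinv.toPerm]
  rw [← Finset.sum_add_distrib, Fintype.card, Finset.card_eq_sum_ones]
  refine Finset.sum_congr rfl fun g _ => ?_
  have hT : xs.map (labelled (flip g)) = xs.map (labelled g) := by
    refine List.map_congr_left fun j hj => ?_
    have : j ≠ i := fun h => hi (h ▸ hj)
    simp [labelled, flip, this]
  have hgi : flip g i = !g i := by simp [flip]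
  simp only [Function.Involutive.coe_toPerm, hT, hgi]
  cases A (xs.map (labelled g)) i <;> cases g i <;> simp

theorem sum_err_ge (A : Learner) (xs : List s) (hs : 2 * xs.length < s.card) :
    s.card * Fintype.card (s → Bool) ≤
      4 * ∑ g : s → Bool, ∑ i : s, (if A (xs.map (labelled g)) i ≠ g i then 1 else 0) := by
  classical
  rw [Finset.sum_comm]
  set N := Fintype.card (s → Bool)
  have h1 : (xs.toFinset)ᶜ.card * N ≤
      2 * ∑ i : s, ∑ g : s → Bool, (if A (xs.map (labelled g)) i ≠ g i then 1 else 0) := by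
    rw [Finset.mul_sum, ← smul_eq_mul, ← Finset.sum_const]
    refine (Finset.sum_le_sum fun i hi => ?_).trans
      (Finset.sum_le_sum_of_subset (Finset.subset_univ (xs.toFinset)ᶜ))
    rw [two_mul_card_err A xs (by simpa using hi)]
  have h2 : s.card ≤ 2 * (xs.toFinset)ᶜ.card := by
    rw [Finset.card_compl, Fintype.card_coe]
    have := xs.toFinset_card_le
    omega
  calc s.card * N ≤ 2 * (xs.toFinset)ᶜ.card * N := Nat.mul_le_mul_right _ h2
    _ = 2 * ((xs.toFinset)ᶜ.card * N) := by ring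
    _ ≤ _ := by omega

/-- The no-free-lunch argument: on a shattered set of more than `2m` points, a learner seeing `m`
samples has expected error at least `1/4` on average over all labelings. -/
theorem finiteVCDim_of_pacLearns {A : Learner} {H : Set Hyp} (hpac : PACLearns A H) :
    FiniteVCDim H := by
  classical
  by_contra hcon
  simp only [FiniteVCDim, VCDimAtMost, not_exists, not_forall, not_le] at hcon
  obtain ⟨m, hm⟩ := hpac 16
  obtain ⟨s, hsh, hcard⟩ := hcon (2 * m)
  have hc := hm m le_rfl
  have hpos : 0 < s.card := by omega
  have : Nonempty s := (Finset.card_pos.1 hpos).to_subtype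
  let U : PMF s := PMF.uniformOfFintype s
  let D : (s → Bool) → PMF (ℕ × Bool) := fun g => U.map (labelled g)
  have hgen : ∀ g h, genError (D g) h =
      ((∑ i : s, (if h i ≠ g i then 1 else 0) : ℕ) : ℝ≥0∞) / (s.card : ℝ≥0∞) := by
    intro g h
    simp only [D, U, genError]
    rw [PMF.toOuterMeasure_map_apply, PMF.toOuterMeasure_uniformOfFintype_apply, Fintype.card_coe,
      Fintype.card_subtype, Finset.card_filter]
    congr 2
    refine Finset.sum_congr rfl fun i _ => ?_
    by_cases hi : h i = g i <;> simp [labelled, hi]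
  have hinf : ∀ g, ⨅ h ∈ H, genError (D g) h = 0 := by
    intro g
    obtain ⟨h, hH, hh⟩ := hsh fun x => if hx : x ∈ s then g ⟨x, hx⟩ else false
    refine le_antisymm ((iInf₂_le h hH).trans ?_) zero_le
    rw [hgen, Finset.sum_eq_zero]
    · simp
    · intro i _
      have := hh i i.2
      simp_all
  set N := Fintype.card (s → Bool) with hN
  have hNpos : (N : ℝ≥0∞) ≠ 0 := by
    exact_mod_cast (Fintype.card_pos (α := s → Bool)).ne'
  have hup : ∑ g : s → Bool, iidExp U m (fun xs => genError (D g) (A (xs.map (labelled g))))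
      ≤ N * (2 * ((16 : ℕ) : ℝ≥0∞)⁻¹) := by
    rw [hN, Fintype.card, ← nsmul_eq_mul, ← Finset.sum_const]
    refine Finset.sum_le_sum fun g _ => ?_
    rw [← iidExp_map U (labelled g) m (fun S => genError (D g) (A S))]
    exact iidExp_genError_le hc (D g) (hinf g)
  have hlow : N * (4 : ℝ≥0∞)⁻¹ ≤
      ∑ g : s → Bool, iidExp U m (fun xs => genError (D g) (A (xs.map (labelled g)))) := by
    rw [← iidExp_sum, ← iidExp_const U m (N * (4 : ℝ≥0∞)⁻¹)]
    refine iidExp_mono U m fun xs hxs _ => ?_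
    simp only [hgen]
    simp_rw [div_eq_mul_inv]
    rw [← Finset.sum_mul, ← div_eq_mul_inv, ← div_eq_mul_inv]
    have h1 := sum_err_ge A xs (by omega)
    rw [ENNReal.le_div_iff_mul_le (Or.inl (by exact_mod_cast hpos.ne')) (Or.inl (by simp)),
      ENNReal.div_eq_inv_mul, mul_assoc, ← ENNReal.div_eq_inv_mul]
    refine ENNReal.div_le_of_le_mul' ?_
    rw [mul_comm]
    exact_mod_cast h1
  have hfin := hlow.trans hup
  rw [ENNReal.mul_le_mul_iff_right hNpos (by simp)] at hfin
  have h8 : (2 * ((16 : ℕ) : ℝ≥0∞)⁻¹) < 4⁻¹ := by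
    have e1 : (4 : ℝ≥0∞)⁻¹ = ENNReal.ofReal (1/4) := by
      rw [one_div, ENNReal.ofReal_inv_of_pos (by norm_num)]; norm_num
    have e2 : ((16 : ℕ) : ℝ≥0∞)⁻¹ = ENNReal.ofReal (1/16) := by
      rw [one_div, ENNReal.ofReal_inv_of_pos (by norm_num)]; norm_num
    rw [e1, e2, two_mul, ← ENNReal.ofReal_add (by norm_num) (by norm_num)]
    exact (ENNReal.ofReal_lt_ofReal_iff (by norm_num)).2 (by norm_num)
  exact absurd hfin (not_le.2 h8)

end NoFreeLunch

/-! ### Symmetrization -/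

section Symmetrization

variable {Z : Type*}

/-- The average of `G` over all lists obtained from a list of pairs by swapping the two components
of an arbitrary subset of its entries. -/
noncomputable def swapAvg : List (Z × Z) → (List (Z × Z) → ℝ≥0∞) → ℝ≥0∞
  | [], G => G []
  | (p, q) :: P, G =>
    2⁻¹ * (swapAvg P (fun P' => G ((p, q) :: P')) + swapAvg P (fun P' => G ((q, p) :: P')))

/-- Swapping only permutes the points of the list, so `G` and `G'` need only be compared on lists
with entries from a fixed set of points; a finite set of traces then suffices. -/
theorem swapAvg_mono {P : List (Z × Z)} {G G' : List (Z × Z) → ℝ≥0∞} (U : Set Z)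
    (hP : ∀ r ∈ P, r.1 ∈ U ∧ r.2 ∈ U)
    (h : ∀ P' : List (Z × Z), (∀ r ∈ P', r.1 ∈ U ∧ r.2 ∈ U) → G P' ≤ G' P') :
    swapAvg P G ≤ swapAvg P G' := by
  induction P generalizing G G' with
  | nil => exact h [] (by simp)
  | cons r P ih =>
    obtain ⟨p, q⟩ := r
    simp only [List.forall_mem_cons] at hP
    refine mul_le_mul_right (add_le_add ?_ ?_) _
    · exact ih hP.2 fun P' hP' => h _ (List.forall_mem_cons.2 ⟨hP.1, hP'⟩)
    · exact ih hP.2 fun P' hP' => h _ (List.forall_mem_cons.2 ⟨hP.1.symm, hP'⟩)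

theorem swapAvg_sum {ι : Type*} (s : Finset ι) (P : List (Z × Z))
    (G : ι → List (Z × Z) → ℝ≥0∞) :
    swapAvg P (fun P' => ∑ i ∈ s, G i P') = ∑ i ∈ s, swapAvg P (G i) := by
  induction P generalizing G with
  | nil => rfl
  | cons r P ih =>
    obtain ⟨p, q⟩ := r
    simp only [swapAvg, ih, ← Finset.sum_add_distrib, ← Finset.mul_sum]

theorem swapAvg_const_mul (P : List (Z × Z)) (c : ℝ≥0∞) (G : List (Z × Z) → ℝ≥0∞) :
    swapAvg P (fun P' => c * G P') = c * swapAvg P G := by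
  induction P generalizing G with
  | nil => rfl
  | cons r P ih =>
    obtain ⟨p, q⟩ := r
    simp only [swapAvg, ih]
    ring

theorem swapAvg_prod_le (f : Z → Z → ℝ≥0∞) (c : ℝ≥0∞)
    (h : ∀ p q, 2⁻¹ * (f p q + f q p) ≤ c) (P : List (Z × Z)) :
    swapAvg P (fun P' => (P'.map fun r => f r.1 r.2).prod) ≤ c ^ P.length := by
  induction P with
  | nil => simp [swapAvg]
  | cons r P ih =>
    obtain ⟨p, q⟩ := r
    simp only [swapAvg, List.map_cons, List.prod_cons, swapAvg_const_mul, List.length_cons]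
    rw [← add_mul, ← mul_assoc, pow_succ']
    exact mul_le_mul' (h p q) ih

theorem iidExp_pair_succ (D : PMF Z) (m : ℕ) (K : List Z → List Z → ℝ≥0∞) :
    iidExp D (m + 1) (fun S => iidExp D (m + 1) fun S' => K S S')
      = ∑' p, ∑' q, D p * (D q *
          iidExp D m fun S => iidExp D m fun S' => K (p :: S) (q :: S')) := by
  simp only [iidExp, iidExp_tsum, iidExp_const_mul, ENNReal.tsum_mul_left]

/-- The two samples of a double sample are exchangeable entry by entry. -/
theorem iidExp_swapAvg (D : PMF Z) (m : ℕ) (G : List (Z × Z) → ℝ≥0∞) :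
    iidExp D m (fun S => iidExp D m fun S' => swapAvg (S.zip S') G)
      = iidExp D m (fun S => iidExp D m fun S' => G (S.zip S')) := by
  induction m generalizing G with
  | zero => rfl
  | succ m ih =>
    rw [iidExp_pair_succ, iidExp_pair_succ]
    simp only [List.zip_cons_cons, swapAvg, iidExp_const_mul, iidExp_add, ih]
    set X : Z → Z → ℝ≥0∞ := fun p q =>
      iidExp D m fun S => iidExp D m fun S' => G ((p, q) :: S.zip S')
    have hX : ∑' p, ∑' q, D p * (D q * X q p) = ∑' p, ∑' q, D p * (D q * X p q) := by
      rw [ENNReal.tsum_comm]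
      exact tsum_congr fun p => tsum_congr fun q => by ring
    calc ∑' p, ∑' q, D p * (D q * (2⁻¹ * (X p q + X q p)))
        = 2⁻¹ * (∑' p, ∑' q, D p * (D q * X p q) + ∑' p, ∑' q, D p * (D q * X q p)) := by
          simp only [← ENNReal.tsum_add, ← ENNReal.tsum_mul_left]
          exact tsum_congr fun p => tsum_congr fun q => by ring
      _ = ∑' p, ∑' q, D p * (D q * X p q) := by
          rw [hX, ← two_mul, ← mul_assoc, ENNReal.inv_mul_cancel (by simp) (by simp), one_mul]

end Symmetrization

/-! ### Uniform deviation bounds -/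

section Deviation

variable {Z ι : Type*}

/-- The exponential as an extended nonnegative real. -/
noncomputable def expE (x : ℝ) : ℝ≥0∞ := ENNReal.ofReal (Real.exp x)

theorem expE_add (x y : ℝ) : expE (x + y) = expE x * expE y := by
  rw [expE, Real.exp_add, ENNReal.ofReal_mul (Real.exp_pos x).le]; rfl

theorem expE_nat_mul (n : ℕ) (x : ℝ) : expE (n * x) = expE x ^ n := by
  rw [expE, Real.exp_nat_mul, ENNReal.ofReal_pow (Real.exp_pos x).le]; rfl

theorem expE_mono {x y : ℝ} (h : x ≤ y) : expE x ≤ expE y :=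
  ENNReal.ofReal_le_ofReal (Real.exp_le_exp.2 h)

/-- The probability, as a real number, that the loss predicate `l` holds. -/
noncomputable def risk (D : PMF Z) (l : Z → Bool) : ℝ := (D.toOuterMeasure {z | l z = true}).toReal

theorem toOuterMeasure_add_compl (D : PMF Z) (l : Z → Bool) :
    D.toOuterMeasure {z | l z = true} + D.toOuterMeasure {z | (!l z) = true} = 1 := by
  rw [PMF.toOuterMeasure_apply, PMF.toOuterMeasure_apply, ← ENNReal.tsum_add, ← D.tsum_coe]
  refine tsum_congr fun z => ?_
  cases h : l z <;> simp [h]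

theorem toOuterMeasure_ne_top (D : PMF Z) (l : Z → Bool) :
    D.toOuterMeasure {z | l z = true} ≠ ⊤ := by
  intro h
  have := toOuterMeasure_add_compl D l
  simp [h] at this

theorem ofReal_risk (D : PMF Z) (l : Z → Bool) :
    ENNReal.ofReal (risk D l) = D.toOuterMeasure {z | l z = true} :=
  ENNReal.ofReal_toReal (toOuterMeasure_ne_top D l)

theorem risk_nonneg (D : PMF Z) (l : Z → Bool) : 0 ≤ risk D l := ENNReal.toReal_nonneg

theorem risk_not (D : PMF Z) (l : Z → Bool) : risk D (fun z => !l z) = 1 - risk D l := by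
  have h := congrArg ENNReal.toReal (toOuterMeasure_add_compl D l)
  rw [ENNReal.toReal_add (toOuterMeasure_ne_top D l) (toOuterMeasure_ne_top D fun z => !l z)] at h
  simp only [ENNReal.toReal_one] at h
  simp only [risk]
  linarith

/-- Jensen's inequality for the exponential of a Bernoulli variable. -/
theorem expE_risk_le (D : PMF Z) (l : Z → Bool) (t : ℝ) :
    expE (t * risk D l) ≤ ∑' z, D z * expE (t * (l z).toNat) := by
  have h1 : ∑' z, D z * expE (t * (l z).toNat) = ENNReal.ofReal (risk D l) * expE t
      + ENNReal.ofReal (risk D fun z => !l z) := by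
    rw [ofReal_risk, ofReal_risk, PMF.toOuterMeasure_apply, PMF.toOuterMeasure_apply,
      ← ENNReal.tsum_mul_right, ← ENNReal.tsum_add]
    refine tsum_congr fun z => ?_
    cases h : l z <;> simp [h, expE]
  have hn : 0 ≤ 1 - risk D l := by rw [← risk_not]; exact risk_nonneg _ _
  rw [h1, risk_not, expE, expE, ← ENNReal.ofReal_mul (risk_nonneg D l),
    ← ENNReal.ofReal_add (mul_nonneg (risk_nonneg D l) (Real.exp_pos t).le) hn]
  refine ENNReal.ofReal_le_ofReal ?_
  have := convexOn_exp.2 (Set.mem_univ t) (Set.mem_univ 0) (risk_nonneg D l) hn (by ring)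
  simpa [mul_comm] using this

/-- The average of `exp (± t δ)` for a difference `δ` of two losses is `cosh (t δ)`. -/
theorem half_expE_add_le (t : ℝ) (a b : Bool) :
    2⁻¹ * (expE (t * (b.toNat - a.toNat)) + expE (t * (a.toNat - b.toNat)))
      ≤ expE (t ^ 2 / 2) := by
  have h2 : (2 : ℝ≥0∞)⁻¹ = ENNReal.ofReal (1 / 2) := by
    rw [one_div, ENNReal.ofReal_inv_of_pos (by norm_num)]; norm_num
  rw [h2, expE, expE, ← ENNReal.ofReal_add (Real.exp_pos _).le (Real.exp_pos _).le,
    ← ENNReal.ofReal_mul (by norm_num)]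
  refine ENNReal.ofReal_le_ofReal ?_
  have hc := Real.cosh_le_exp_half_sq (t * (b.toNat - a.toNat))
  rw [Real.cosh_eq] at hc
  have hneg : -(t * ((b.toNat : ℝ) - a.toNat)) = t * (a.toNat - b.toNat) := by ring
  rw [hneg] at hc
  have hsq : (t * ((b.toNat : ℝ) - a.toNat)) ^ 2 / 2 ≤ t ^ 2 / 2 := by
    cases a <;> cases b <;> simp <;> positivity
  calc _ = _ := by ring
    _ ≤ _ := hc
    _ ≤ _ := Real.exp_le_exp.2 hsq

theorem prod_expE_eq (l : Z → Bool) (t : ℝ) (S : List Z) :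
    (S.map fun z => expE (t * (l z).toNat)).prod = expE (t * S.countP l) := by
  induction S with
  | nil => simp [expE]
  | cons z S ih =>
    rw [List.map_cons, List.prod_cons, ih, ← expE_add, List.countP_cons]
    congr 1
    cases l z <;> simp
    ring

theorem prod_zip_eq (l : Z → Bool) (t : ℝ) : ∀ S S' : List Z, S.length = S'.length →
    ((S.zip S').map fun r => expE (t * ((l r.2).toNat - (l r.1).toNat))).prod
      = expE (-t * S.countP l) * expE (t * S'.countP l)
  | [], [], _ => by simp [expE]
  | z :: S, z' :: S', h => by
    rw [List.zip_cons_cons, List.map_cons, List.prod_cons,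
      prod_zip_eq l t S S' (by simpa using h), ← expE_add, ← expE_add, ← expE_add,
      List.countP_cons, List.countP_cons]
    congr 1
    cases l z <;> cases l z' <;> simp <;> ring

/-- `HasTraces l k N` says that the loss predicates `l i` have at most `N` different traces on
every list of `k` points, the traces being represented by the members of a finite index set. -/
def HasTraces (l : ι → Z → Bool) (k N : ℕ) : Prop :=
  ∀ L : List Z, L.length = k → ∃ R : Finset ι, R.card ≤ N ∧
    ∀ i, ∃ r ∈ R, ∀ x ∈ L, l i x = l r x

/-- The exponential moment of the deviation between true and empirical risk of a loss predicate
that may be chosen depending on the sample. -/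
theorem iidExp_deviation_le (D : PMF Z) {l : ι → Z → Bool} {m N : ℕ}
    (hl : HasTraces l (2 * m) N) (c : List Z → ι) (t : ℝ) :
    iidExp D m (fun S => expE (t * (m * risk D (l (c S)) - S.countP (l (c S)))))
      ≤ N * expE (m * (t ^ 2 / 2)) := by
  let g : ι → List (Z × Z) → ℝ≥0∞ := fun i P =>
    (P.map fun r => expE (t * ((l i r.2).toNat - (l i r.1).toNat))).prod
  let G : List (Z × Z) → ℝ≥0∞ := fun P => ⨆ i, g i P
  -- the true risk is replaced by the empirical risk on an independent second sample
  have step1 : iidExp D m (fun S => expE (t * (m * risk D (l (c S)) - S.countP (l (c S)))))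
      ≤ iidExp D m (fun S => iidExp D m fun S' => G (S.zip S')) := by
    refine iidExp_mono D m fun S hS _ => ?_
    have e1 : t * (m * risk D (l (c S)) - S.countP (l (c S)))
        = -t * S.countP (l (c S)) + m * (t * risk D (l (c S))) := by ring
    rw [e1, expE_add, expE_nat_mul]
    refine (mul_le_mul_right (pow_le_pow_left' (expE_risk_le D (l (c S)) t) m) _).trans ?_
    rw [← iidExp_prod, ← iidExp_const_mul]
    refine iidExp_mono D m fun S' hS' _ => ?_
    rw [prod_expE_eq, ← prod_zip_eq (l (c S)) t S S' (hS.trans hS'.symm)]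
    exact le_iSup (fun i => g i (S.zip S')) (c S)
  refine step1.trans ?_
  rw [← iidExp_swapAvg, ← iidExp_const D m (N * expE (m * (t ^ 2 / 2)))]
  refine iidExp_mono D m fun S hS _ => ?_
  rw [← iidExp_const D m (N * expE (m * (t ^ 2 / 2)))]
  refine iidExp_mono D m fun S' hS' _ => ?_
  obtain ⟨R, hRN, hR⟩ := hl (S ++ S') (by simp [hS, hS', two_mul])
  have hlen : (S.zip S').length = m := by simp [hS, hS']
  calc swapAvg (S.zip S') G ≤ swapAvg (S.zip S') (fun P => ∑ r ∈ R, g r P) := by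
        refine swapAvg_mono {x | x ∈ S ++ S'} ?_ ?_
        · rintro ⟨p, q⟩ hr
          have := List.of_mem_zip hr
          simp [this.1, this.2]
        · refine fun P hP => iSup_le fun i => ?_
          obtain ⟨r, hrR, hr⟩ := hR i
          have : g i P = g r P := by
            simp only [g]
            congr 1
            refine List.map_congr_left fun z hz => ?_
            rw [hr z.1 (hP z hz).1, hr z.2 (hP z hz).2]
          rw [this]
          exact Finset.single_le_sum (f := fun r => g r P) (fun _ _ => zero_le) hrR
    _ = ∑ r ∈ R, swapAvg (S.zip S') (g r) := swapAvg_sum R _ g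
    _ ≤ ∑ r ∈ R, expE (t ^ 2 / 2) ^ m := by
        refine Finset.sum_le_sum fun r _ => ?_
        have := swapAvg_prod_le (fun p q => expE (t * ((l r q).toNat - (l r p).toNat)))
          (expE (t ^ 2 / 2)) (fun p q => half_expE_add_le t (l r p) (l r q)) (S.zip S')
        rwa [hlen] at this
    _ ≤ N * expE (m * (t ^ 2 / 2)) := by
        rw [Finset.sum_const, nsmul_eq_mul, expE_nat_mul]
        exact mul_le_mul_left (by exact_mod_cast hRN) _

theorem iidExp_deviation_indicator_le (D : PMF Z) {l : ι → Z → Bool} {m N : ℕ}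
    (hl : HasTraces l (2 * m) N) (c : List Z → ι) {ε : ℝ} (hε : 0 < ε) :
    iidExp D m (Set.indicator
      {S | m * ε ≤ m * risk D (l (c S)) - S.countP (l (c S))} 1)
      ≤ N * expE (-(m * (ε ^ 2 / 2))) := by
  -- Markov's inequality for the exponential moment with the optimal parameter `t = ε`
  have h1 := mul_le_mul_right (iidExp_deviation_le D hl c ε) (expE (-(m * ε ^ 2)))
  have h2 : expE (-(m * ε ^ 2)) * (N * expE (m * (ε ^ 2 / 2)))
      = N * expE (-(m * (ε ^ 2 / 2))) := by
    rw [mul_left_comm, ← expE_add]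
    congr 2
    ring
  rw [h2, ← iidExp_const_mul] at h1
  refine le_trans (iidExp_mono D m fun S _ _ => ?_) h1
  rw [← expE_add]
  by_cases hS : (m * ε ≤ m * risk D (l (c S)) - S.countP (l (c S)))
  · rw [Set.indicator_of_mem (by exact hS), Pi.one_apply,
      show (1 : ℝ≥0∞) = expE 0 by simp [expE]]
    refine expE_mono ?_
    nlinarith [mul_le_mul_of_nonneg_left hS hε.le]
  · rw [Set.indicator_of_notMem (by exact hS)]
    exact zero_le

end Deviation

/-! ### Growth of classes of finite VC dimension -/

section Growth

open Classical in
/-- The traces of `H` on `X`, as a family of subsets of `X`. -/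
noncomputable def traceFamily (H : Set Hyp) (X : Finset ℕ) : Finset (Finset ℕ) :=
  X.powerset.filter fun a => ∃ h ∈ H, X.filter (fun x => h x = true) = a

theorem shatters_of_traceFamily {H : Set Hyp} {X t : Finset ℕ}
    (ht : (traceFamily H X).Shatters t) : Shatters H t ∧ t ⊆ X := by
  classical
  have htX : t ⊆ X := by
    obtain ⟨a, ha, hta⟩ := ht.exists_superset
    exact hta.trans (Finset.mem_powerset.1 (Finset.mem_filter.1 ha).1)
  refine ⟨fun g => ?_, htX⟩
  obtain ⟨a, ha, hta⟩ := ht (Finset.filter_subset (fun x => g x = true) t)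
  obtain ⟨h, hH, rfl⟩ := (Finset.mem_filter.1 ha).2
  refine ⟨h, hH, fun x hx => ?_⟩
  have := Finset.ext_iff.1 hta x
  simp only [Finset.mem_inter, Finset.mem_filter, hx, htX hx, true_and] at this
  exact Bool.eq_iff_iff.2 this

/-- A polynomial form of the Sauer–Shelah bound, via Pajor's inequality. -/
theorem card_traceFamily_le {H : Set Hyp} {d : ℕ} (hd : VCDimAtMost H d) (X : Finset ℕ) :
    (traceFamily H X).card ≤ (d + 1) * (X.card + 1) ^ d := by
  classical
  have hsub : (traceFamily H X).shatterer ⊆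
      (Finset.range (d + 1)).biUnion fun k => X.powersetCard k := by
    intro t ht
    obtain ⟨h1, h2⟩ := shatters_of_traceFamily (Finset.mem_shatterer.1 ht)
    simp only [Finset.mem_biUnion, Finset.mem_range, Finset.mem_powersetCard]
    exact ⟨t.card, Nat.lt_succ_of_le (hd t h1), h2, rfl⟩
  calc (traceFamily H X).card ≤ (traceFamily H X).shatterer.card :=
        Finset.card_le_card_shatterer _
    _ ≤ _ := Finset.card_le_card hsub
    _ ≤ ∑ k ∈ Finset.range (d + 1), (X.powersetCard k).card := Finset.card_biUnion_le
    _ ≤ ∑ _k ∈ Finset.range (d + 1), (X.card + 1) ^ d := by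
        refine Finset.sum_le_sum fun k hk => ?_
        rw [Finset.card_powersetCard]
        calc X.card.choose k ≤ X.card ^ k := Nat.choose_le_pow _ _
          _ ≤ (X.card + 1) ^ k := Nat.pow_le_pow_left (Nat.le_succ _) k
          _ ≤ (X.card + 1) ^ d :=
            Nat.pow_le_pow_right (Nat.succ_pos _) (Nat.le_of_lt_succ (Finset.mem_range.1 hk))
    _ = _ := by simp

theorem hasTraces_of_vcDimAtMost {H : Set Hyp} {d : ℕ} (hd : VCDimAtMost H d) (k : ℕ) :
    HasTraces (fun (h : H) (z : ℕ × Bool) => h.1 z.1 != z.2) k ((d + 1) * (k + 1) ^ d) := by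
  classical
  intro L hL
  set X : Finset ℕ := (L.map Prod.fst).toFinset with hX
  have hXk : X.card ≤ k := (List.toFinset_card_le _).trans (by simp [hL])
  have hrep : ∀ a : traceFamily H X, ∃ h : H, X.filter (fun x => h.1 x = true) = a.1 := by
    rintro ⟨a, ha⟩
    obtain ⟨h, hH, hh⟩ := (Finset.mem_filter.1 ha).2
    exact ⟨⟨h, hH⟩, hh⟩
  choose rep hrep using hrep
  refine ⟨Finset.univ.image rep, ?_, fun h => ?_⟩
  · calc (Finset.univ.image rep).card ≤ (Finset.univ : Finset (traceFamily H X)).card :=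
          Finset.card_image_le
      _ = (traceFamily H X).card := by simp
      _ ≤ _ := card_traceFamily_le hd X
      _ ≤ _ := Nat.mul_le_mul_left _ (Nat.pow_le_pow_left (by omega) d)
  · have hmem : X.filter (fun x => h.1 x = true) ∈ traceFamily H X :=
      Finset.mem_filter.2 ⟨Finset.mem_powerset.2 (Finset.filter_subset _ _), h.1, h.2, by congr⟩
    refine ⟨rep ⟨_, hmem⟩, Finset.mem_image_of_mem _ (Finset.mem_univ _), fun z hz => ?_⟩
    have hzX : z.1 ∈ X := by
      rw [hX, List.mem_toFinset]
      exact List.mem_map_of_mem hz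
    have := Finset.ext_iff.1 (hrep ⟨_, hmem⟩) z.1
    simp only [Finset.mem_filter, hzX, true_and] at this
    dsimp only
    rw [Bool.eq_iff_iff.2 this]

end Growth

/-! ### An asymptotic ERM for a class of finite VC dimension is a PAC learner -/

section Learning

theorem genError_eq_risk (D : PMF (ℕ × Bool)) (h : Hyp) :
    genError D h = ENNReal.ofReal (risk D fun z => h z.1 != z.2) := by
  rw [ofReal_risk, genError]
  congr 1
  ext z
  simp

theorem empError_eq_ofReal {S : Sample} (hS : S ≠ []) (h : Hyp) :
    empError S h
      = ENNReal.ofReal ((S.countP fun z => h z.1 != z.2 : ℕ) / (S.length : ℝ)) := by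
  have hpos : (0 : ℝ) < S.length := by exact_mod_cast List.length_pos_iff.2 hS
  rw [ENNReal.ofReal_div_of_pos hpos, ENNReal.ofReal_natCast, ENNReal.ofReal_natCast]
  rfl

/-- The failure probability of the uniform deviation bound vanishes as the sample size grows. -/
theorem exists_failure_le (d : ℕ) {ε δ : ℝ} (hε : 0 < ε) (hδ : 0 < δ) :
    ∃ M : ℕ, ∀ m ≥ M,
      (((d + 1) * (2 * m + 1) ^ d + 1 : ℕ) : ℝ) * Real.exp (-(m * (ε ^ 2 / 2))) ≤ δ := by
  set r := Real.exp (-(ε ^ 2 / 2)) with hr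
  have hr1 : |r| < 1 := by
    rw [abs_of_pos (Real.exp_pos _), Real.exp_lt_one_iff]
    have := pow_pos hε 2
    linarith
  have ht := (tendsto_pow_const_mul_const_pow_of_abs_lt_one d hr1).const_mul
    ((d + 1) * 3 ^ d + 1 : ℝ)
  rw [mul_zero] at ht
  obtain ⟨M, hM⟩ := Filter.eventually_atTop.1 (ht.eventually_le_const hδ)
  refine ⟨max M 1, fun m hm => le_trans ?_ (hM m (le_trans (le_max_left _ _) hm))⟩
  have hm1 : (1 : ℝ) ≤ m := by exact_mod_cast le_trans (le_max_right _ _) hm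
  have he : Real.exp (-(m * (ε ^ 2 / 2))) = r ^ m := by
    rw [hr, ← Real.exp_nat_mul]
    congr 1
    ring
  rw [he, ← mul_assoc]
  refine mul_le_mul_of_nonneg_right ?_ (by positivity)
  push_cast
  have h1 : (2 * m + 1 : ℝ) ^ d ≤ 3 ^ d * m ^ d := by
    rw [← mul_pow]
    exact pow_le_pow_left₀ (by positivity) (by linarith) d
  have h2 : (1 : ℝ) ≤ m ^ d := one_le_pow₀ hm1
  have h3 := mul_le_mul_of_nonneg_left h1 (by positivity : (0 : ℝ) ≤ d + 1)
  linarith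

theorem pacLearns_of_asymptoticERM {A : Learner} {H : Set Hyp} (hA : IsAsymptoticERM A H)
    (hVC : FiniteVCDim H) : PACLearns A H := by
  obtain ⟨d, hd⟩ := hVC
  obtain ⟨hprop, err, -, herr, hAE⟩ := hA
  intro n
  rcases Nat.eq_zero_or_pos n with rfl | hn
  · exact ⟨0, fun m _ D => by simp⟩
  have hnR : (0 : ℝ) < n := by exact_mod_cast hn
  -- the accuracy `1/n` is spent on four errors of size `ε`
  set ε : ℝ := 1 / (4 * n) with hεdef
  have hε : 0 < ε := by positivity
  have hε4 : ENNReal.ofReal ε + ENNReal.ofReal (3 * ε) = (n : ℝ≥0∞)⁻¹ := by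
    rw [← ENNReal.ofReal_add hε.le (by positivity), ← ENNReal.ofReal_natCast n,
      ← ENNReal.ofReal_inv_of_pos hnR]
    congr 1
    rw [hεdef]
    field_simp
    norm_num
  obtain ⟨M₁, hM₁⟩ := (ENNReal.tendsto_atTop_zero.1 herr) (ENNReal.ofReal ε) (by simpa using hε)
  obtain ⟨M₂, hM₂⟩ := exists_failure_le d hε (inv_pos.2 hnR)
  refine ⟨max (max M₁ M₂) 1, fun m hm D => ?_⟩
  have hm₁ : M₁ ≤ m := le_trans (le_trans (le_max_left _ _) (le_max_left _ _)) hm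
  have hm₂ : M₂ ≤ m := le_trans (le_trans (le_max_right _ _) (le_max_left _ _)) hm
  have hm0 : 1 ≤ m := le_trans (le_max_right _ _) hm
  have hmR : (0 : ℝ) < m := by exact_mod_cast hm0
  -- a nearly optimal comparison hypothesis
  obtain ⟨h₀, hh₀, hopt⟩ : ∃ h₀ ∈ H, genError D h₀ ≤ (⨅ h ∈ H, genError D h)
      + ENNReal.ofReal ε := by
    have hfin : (⨅ h ∈ H, genError D h) ≠ ⊤ :=
      ne_top_of_le_ne_top ENNReal.one_ne_top
        ((iInf₂_le (A []) (hprop [])).trans (genError_le_one D _))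
    have hlt : (⨅ h ∈ H, genError D h) < (⨅ h ∈ H, genError D h) + ENNReal.ofReal ε :=
      ENNReal.lt_add_right hfin (by simpa using hε)
    obtain ⟨h, hh⟩ := iInf_lt_iff.1 hlt
    obtain ⟨hH, hh⟩ := iInf_lt_iff.1 hh
    exact ⟨h, hH, hh.le⟩
  rw [samplePr_eq_iidExp]
  refine le_iidExp_of_compl_le D m _ ?_
  let l : H → ℕ × Bool → Bool := fun h z => h.1 z.1 != z.2
  let c : Sample → H := fun S => ⟨A S, hprop S⟩
  -- the complementary loss of `h₀`: its deviation is the opposite of the deviation of `h₀`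
  let l₀ : Unit → ℕ × Bool → Bool := fun _ z => !(h₀ z.1 != z.2)
  have hl₀ : HasTraces l₀ (2 * m) 1 := fun L _ => ⟨{()}, by simp, fun i => ⟨(), by simp⟩⟩
  have b1 := iidExp_deviation_indicator_le D (hasTraces_of_vcDimAtMost hd (2 * m)) c hε
  have b2 := iidExp_deviation_indicator_le D hl₀ (fun _ => ()) hε
  set E₁ : Set Sample := {S | m * ε ≤ m * risk D (l (c S)) - S.countP (l (c S))}
  set E₂ : Set Sample := {S | m * ε ≤ m * risk D (l₀ ()) - S.countP (l₀ ())}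
  refine (iidExp_mono D m (G := fun S => E₁.indicator 1 S + E₂.indicator 1 S) ?_).trans ?_
  · intro S hSm _
    by_cases hS₁ : S ∈ E₁
    · rw [Set.indicator_of_mem hS₁]
      exact le_add_right (Set.indicator_le_self _ _ _)
    by_cases hS₂ : S ∈ E₂
    · rw [Set.indicator_of_mem hS₂]
      exact le_add_left (Set.indicator_le_self _ _ _)
    refine le_of_eq_of_le (Set.indicator_of_notMem ?_ _) zero_le
    rw [Set.mem_compl_iff, not_not]
    -- outside both exceptional events the learner is accurate
    have hne : S ≠ [] := by rintro rfl; simp at hSm; omega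
    have hemp : empError S (A S) ≤ empError S h₀ + ENNReal.ofReal ε :=
      (hAE S).trans (add_le_add (iInf₂_le h₀ hh₀) (by rw [hSm]; exact hM₁ m hm₁))
    rw [empError_eq_ofReal hne, empError_eq_ofReal hne, ← ENNReal.ofReal_add (by positivity) hε.le,
      ENNReal.ofReal_le_ofReal_iff (by positivity), hSm, div_le_iff₀ hmR, add_mul,
      div_mul_cancel₀ _ hmR.ne'] at hemp
    have k1 : m * risk D (l (c S)) - S.countP (l (c S)) < m * ε := not_le.1 hS₁
    have k2 : m * risk D (l₀ ()) - S.countP (l₀ ()) < m * ε := not_le.1 hS₂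
    have hcount : (S.countP (l₀ ()) : ℝ)
        = m - S.countP fun z => h₀ z.1 != z.2 := by
      have := S.length_eq_countP_add_countP (fun z => h₀ z.1 != z.2)
      rw [eq_sub_iff_add_eq, ← hSm, this]
      push_cast
      rw [add_comm]
      congr 3
      funext z
      cases h1 : h₀ z.1 <;> cases h2 : z.2 <;> simp [l₀, h1, h2]
    rw [show risk D (l₀ ()) = 1 - risk D (fun z => h₀ z.1 != z.2) from risk_not D _,
      hcount] at k2
    have k3 : m * risk D (l (c S)) ≤ m * (risk D (fun z => h₀ z.1 != z.2) + 3 * ε) := by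
      simp only [l, c] at k1 ⊢
      linarith
    have k4 := le_of_mul_le_mul_left k3 hmR
    calc genError D (A S) = ENNReal.ofReal (risk D (l (c S))) := genError_eq_risk D _
      _ ≤ ENNReal.ofReal (risk D (fun z => h₀ z.1 != z.2) + 3 * ε) :=
        ENNReal.ofReal_le_ofReal k4
      _ = genError D h₀ + ENNReal.ofReal (3 * ε) := by
        rw [ENNReal.ofReal_add (risk_nonneg _ _) (by positivity), genError_eq_risk]
      _ ≤ (⨅ h ∈ H, genError D h) + ENNReal.ofReal ε + ENNReal.ofReal (3 * ε) :=
        add_le_add hopt le_rfl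
      _ = _ := by rw [add_assoc, hε4]
  · rw [iidExp_add]
    refine (add_le_add b1 b2).trans ?_
    rw [← add_mul, ← ENNReal.ofReal_natCast n, ← ENNReal.ofReal_inv_of_pos hnR]
    refine le_trans (le_of_eq ?_) (ENNReal.ofReal_le_ofReal (hM₂ m hm₂))
    rw [ENNReal.ofReal_mul (by positivity), ENNReal.ofReal_natCast, Nat.cast_add]
    rfl

end Learning

/-- `H` is properly CPAC learnable iff its VC dimension is finite and
it has a computable asymptotic ERM. -/
theorem properCPAC_iff_finiteVC_and_computable_asymptoticERM (H : Set Hyp) :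
    ProperlyCPACLearnable H ↔
      (FiniteVCDim H ∧ ∃ A : Learner, ComputableLearner A ∧ IsAsymptoticERM A H) := by
  constructor
  · rintro ⟨A, hcomp, hprop, hpac⟩
    exact ⟨finiteVCDim_of_pacLearns hpac, fun S => A (bestTuple A S),
      Computable₂.comp hcomp ((computable_bestTuple hcomp).comp Computable.fst) Computable.snd,
      isAsymptoticERM_bestTuple hprop hpac⟩
  · rintro ⟨hVC, A, hcomp, hA⟩
    exact ⟨A, hcomp, hA.1, pacLearns_of_asymptoticERM hA hVC⟩
end

section
/- If a hypothesis class 𝓗 ⊆ {0,1}^ℕ has finite VC dimension and A is an asymptotic ERM for 𝓗, then A PAC learns 𝓗. -/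
/-!
The theorem is the classical uniform convergence argument for VC classes.

* *Ghost sample* (`tsum_deviation_le`): the expected largest deviation
  `sup_h (m L_D(h) - mistakes of h)` is at most the expected largest excess of mistakes on a second
  independent sample over the first.
* *Random signs* (`tsum_swap`, `tsum_excess_le`): exchanging entries of the two samples preserves
  their joint law, so it suffices to average the excess over all `2 ^ m` exchanges of a fixed pair.
* *Finite maximum* (`exists_traces`, `sum_excess_swap_le`): on a fixed pair only
  `N ≤ (d + 1) (2m + 1) ^ d` traces of `H` occur (Sauer–Shelah). For each of them the excess `r` is
  a sum of signed terms in `[-1, 1]`, with exponential moment at most `exp (t² m / 2)`. Since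
  `r ≤ t m + exp (t (r - t m)) / t`, the average of the maximum is at most
  `t m + N exp (-t² m / 2) / t`.
* *Markov's inequality* then yields `uniform_convergence`: with high probability
  `L_D(h) ≤ L_S(h) + δ` for all `h ∈ H` at once, with a sample size depending only on `d` and `δ`.

The reverse estimate `L_S(h₀) ≤ L_D(h₀) + δ` is needed only for one nearly optimal `h₀ ∈ H`, and is
the same statement for the class consisting of the complement of `h₀`. With `δ = 1 / (4 n)` the two
estimates, the near optimality of `h₀` and the asymptotic ERM property lose `δ` each.

Samples are handled as functions on `Fin m`, and expectations as `ℝ≥0∞`-valued sums, so that no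
measurability or summability conditions arise.
-/

open Filter
open scoped ENNReal

/-! ### Sums over samples indexed by `Fin m` -/

/-- The probability of the tuple `x` under `m` i.i.d. draws from `D`. -/
noncomputable def tupleWt (D : PMF (ℕ × Bool)) {m : ℕ} (x : Fin m → ℕ × Bool) : ℝ≥0∞ :=
  ∏ i, D (x i)

/-- The number of mistakes of `h` on the tuple `x`. -/
def mistakes (h : Hyp) {m : ℕ} (x : Fin m → ℕ × Bool) : ℕ :=
  ∑ i, if h (x i).1 ≠ (x i).2 then 1 else 0

lemma tsum_fin_succ {α : Type*} {m : ℕ} (F : (Fin (m + 1) → α) → ℝ≥0∞) :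
    ∑' x, F x = ∑' (p : α) (y : Fin m → α), F (Fin.cons p y) := by
  rw [← (Fin.consEquiv (fun _ : Fin (m + 1) => α)).tsum_eq F, ENNReal.tsum_prod']
  rfl

lemma tsum_fin_zero {α : Type*} (F : (Fin 0 → α) → ℝ≥0∞) :
    ∑' x, F x = F Fin.elim0 := by
  rw [tsum_eq_single Fin.elim0]
  intro b hb
  exact absurd (Subsingleton.elim _ _) hb

lemma tupleWt_cons (D : PMF (ℕ × Bool)) {m : ℕ} (p : ℕ × Bool) (x : Fin m → ℕ × Bool) :
    tupleWt D (Fin.cons p x : Fin (m + 1) → ℕ × Bool) = D p * tupleWt D x := by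
  simp [tupleWt, Fin.prod_univ_succ]

lemma tsum_tupleWt (D : PMF (ℕ × Bool)) (m : ℕ) :
    ∑' x : Fin m → ℕ × Bool, tupleWt D x = 1 := by
  induction m with
  | zero => rw [tsum_fin_zero]; simp [tupleWt]
  | succ m ih =>
    rw [tsum_fin_succ]
    simp [tupleWt_cons, ENNReal.tsum_mul_left, ih, D.tsum_coe]

lemma samplePr_eq_tsum (D : PMF (ℕ × Bool)) (m : ℕ) (E : Set Sample) :
    samplePr D m E =
      ∑' x : Fin m → ℕ × Bool, tupleWt D x * E.indicator 1 (List.ofFn x) := by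
  induction m generalizing E with
  | zero =>
    classical
    rw [tsum_fin_zero]
    simp [samplePr, iidPMF, tupleWt, Set.indicator_apply]
  | succ m ih =>
    rw [tsum_fin_succ]
    unfold samplePr at ih ⊢
    rw [iidPMF, PMF.toOuterMeasure_bind_apply]
    refine tsum_congr fun p => ?_
    rw [PMF.toOuterMeasure_map_apply, ih, ← ENNReal.tsum_mul_left]
    refine tsum_congr fun x => ?_
    have hc : List.ofFn (Fin.cons p x : Fin (m + 1) → ℕ × Bool) = p :: List.ofFn x := by
      simp [List.ofFn_succ]
    rw [tupleWt_cons, mul_assoc, hc]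
    rfl

lemma genError_eq_tsum (D : PMF (ℕ × Bool)) (h : Hyp) :
    genError D h = ∑' p, D p * ((if h p.1 ≠ p.2 then 1 else 0 : ℕ) : ℝ≥0∞) := by
  rw [genError, PMF.toOuterMeasure_apply]
  refine tsum_congr fun p => ?_
  by_cases hp : h p.1 = p.2 <;> simp [Set.indicator, hp]

/-- The expected number of mistakes on an i.i.d. sample is `m` times the generalization error. -/
lemma tsum_mistakes (D : PMF (ℕ × Bool)) (h : Hyp) (m : ℕ) :
    ∑' x : Fin m → ℕ × Bool, tupleWt D x * (mistakes h x : ℝ≥0∞) = m * genError D h := by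
  induction m with
  | zero => rw [tsum_fin_zero]; simp [mistakes]
  | succ m ih =>
    have hm : ∀ p (y : Fin m → ℕ × Bool), mistakes h (Fin.cons p y : Fin (m + 1) → ℕ × Bool)
        = (if h p.1 ≠ p.2 then 1 else 0) + mistakes h y := by
      intro p y
      simp [mistakes, Fin.sum_univ_succ]
    rw [tsum_fin_succ]
    simp only [tupleWt_cons, hm, Nat.cast_add, mul_add, ENNReal.tsum_add]
    have h1 : ∀ p, ∑' y : Fin m → ℕ × Bool, D p * tupleWt D y *
        ((if h p.1 ≠ p.2 then 1 else 0 : ℕ) : ℝ≥0∞)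
        = D p * ((if h p.1 ≠ p.2 then 1 else 0 : ℕ) : ℝ≥0∞) := by
      intro p
      rw [ENNReal.tsum_mul_right, ENNReal.tsum_mul_left, tsum_tupleWt, mul_one]
    have h2 : ∀ p, ∑' y : Fin m → ℕ × Bool, D p * tupleWt D y * (mistakes h y : ℝ≥0∞)
        = D p * (m * genError D h) := by
      intro p
      simp only [mul_assoc]
      rw [ENNReal.tsum_mul_left, ih]
    simp only [h1, h2, ENNReal.tsum_mul_right, D.tsum_coe, ← genError_eq_tsum]
    push_cast
    ring

lemma empError_ofFn (h : Hyp) {m : ℕ} (x : Fin m → ℕ × Bool) :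
    empError (List.ofFn x) h = (mistakes h x : ℝ≥0∞) / m := by
  have : ∀ {m : ℕ} (x : Fin m → ℕ × Bool),
      (List.ofFn x).countP (fun p => h p.1 != p.2) = mistakes h x := by
    intro m
    induction m with
    | zero => intro x; simp [mistakes]
    | succ m ih =>
      intro x
      rw [List.ofFn_succ, List.countP_cons, ih]
      simp [mistakes, Fin.sum_univ_succ, add_comm]
  simp [empError, this]

/-! ### Symmetrization -/

/-- The largest excess, over `h ∈ H`, of the mistakes of `h` on the second tuple over
those on the first. -/
noncomputable def excess (H : Set Hyp) {m : ℕ}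
    (z : (Fin m → ℕ × Bool) × (Fin m → ℕ × Bool)) : ℝ≥0∞ :=
  ⨆ h ∈ H, ((mistakes h z.2 : ℝ≥0∞) - mistakes h z.1)

/-- Replacing the true error by the error on an independent second ("ghost") sample. -/
lemma tsum_deviation_le (H : Set Hyp) (D : PMF (ℕ × Bool)) (m : ℕ) :
    ∑' x : Fin m → ℕ × Bool, tupleWt D x * ⨆ h ∈ H, (m * genError D h - mistakes h x) ≤
      ∑' z : (Fin m → ℕ × Bool) × (Fin m → ℕ × Bool),
        tupleWt D z.1 * tupleWt D z.2 * excess H z := by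
  rw [ENNReal.tsum_prod']
  refine ENNReal.tsum_le_tsum fun x => ?_
  simp only [mul_assoc]
  rw [ENNReal.tsum_mul_left]
  gcongr
  refine iSup₂_le fun h hh => ?_
  rw [tsub_le_iff_right, ← tsum_mistakes]
  calc ∑' y : Fin m → ℕ × Bool, tupleWt D y * (mistakes h y : ℝ≥0∞)
      ≤ ∑' y : Fin m → ℕ × Bool, (tupleWt D y * excess H (x, y)
          + tupleWt D y * (mistakes h x : ℝ≥0∞)) := by
        refine ENNReal.tsum_le_tsum fun y => ?_
        rw [← mul_add]
        gcongr
        rw [← tsub_le_iff_right]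
        exact le_iSup₂ (f := fun h (_ : h ∈ H) => ((mistakes h y : ℝ≥0∞) - mistakes h x)) h hh
    _ = _ := by
        rw [ENNReal.tsum_add, ENNReal.tsum_mul_right, tsum_tupleWt, one_mul]

/-- The involution exchanging the two samples at the positions where `σ` is `true`. -/
def swapEquiv {α : Type*} {m : ℕ} (σ : Fin m → Bool) :
    (Fin m → α) × (Fin m → α) ≃ (Fin m → α) × (Fin m → α) :=
  Function.Involutive.toPerm
    (fun z => (fun i => if σ i then z.2 i else z.1 i, fun i => if σ i then z.1 i else z.2 i))
    (by
      rintro ⟨x, y⟩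
      ext i : 2 <;> dsimp only <;> cases σ i <;> simp)

lemma tsum_swap (D : PMF (ℕ × Bool)) (m : ℕ) (σ : Fin m → Bool)
    (F : (Fin m → ℕ × Bool) × (Fin m → ℕ × Bool) → ℝ≥0∞) :
    ∑' z, tupleWt D z.1 * tupleWt D z.2 * F z =
      ∑' z, tupleWt D z.1 * tupleWt D z.2 * F (swapEquiv σ z) := by
  rw [← (swapEquiv σ).tsum_eq]
  refine tsum_congr fun z => ?_
  congr 1
  simp only [tupleWt, ← Finset.prod_mul_distrib]
  refine Finset.prod_congr rfl fun i _ => ?_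
  change D (if σ i then z.2 i else z.1 i) * D (if σ i then z.1 i else z.2 i) = _
  cases σ i <;> simp [mul_comm]

/-- Averaging over all exchanges: a bound on the sum over `σ` at each fixed pair of samples
bounds the expectation. -/
lemma tsum_excess_le (D : PMF (ℕ × Bool)) (m : ℕ)
    (F : (Fin m → ℕ × Bool) × (Fin m → ℕ × Bool) → ℝ≥0∞) (B : ℝ≥0∞)
    (hB : ∀ z, ∑ σ : Fin m → Bool, F (swapEquiv σ z) ≤ 2 ^ m * B) :
    ∑' z, tupleWt D z.1 * tupleWt D z.2 * F z ≤ B := by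
  have h1 : ∑' z : (Fin m → ℕ × Bool) × (Fin m → ℕ × Bool),
      tupleWt D z.1 * tupleWt D z.2 = 1 := by
    rw [ENNReal.tsum_prod']
    simp [ENNReal.tsum_mul_left, tsum_tupleWt]
  have h2 : (2 : ℝ≥0∞) ^ m * ∑' z, tupleWt D z.1 * tupleWt D z.2 * F z ≤ 2 ^ m * B := by
    calc (2 : ℝ≥0∞) ^ m * ∑' z, tupleWt D z.1 * tupleWt D z.2 * F z
        = ∑ σ : Fin m → Bool, ∑' z, tupleWt D z.1 * tupleWt D z.2 * F z := by simp
      _ = ∑ σ : Fin m → Bool, ∑' z, tupleWt D z.1 * tupleWt D z.2 * F (swapEquiv σ z) :=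
          Finset.sum_congr rfl fun σ _ => tsum_swap D m σ F
      _ = ∑' z, ∑ σ : Fin m → Bool, tupleWt D z.1 * tupleWt D z.2 * F (swapEquiv σ z) :=
          (Summable.tsum_finsetSum fun _ _ => ENNReal.summable).symm
      _ ≤ ∑' z : (Fin m → ℕ × Bool) × (Fin m → ℕ × Bool),
            tupleWt D z.1 * tupleWt D z.2 * (2 ^ m * B) := by
          refine ENNReal.tsum_le_tsum fun z => ?_
          rw [← Finset.mul_sum]
          gcongr
          exact hB z
      _ = 2 ^ m * B := by rw [ENNReal.tsum_mul_right, h1, one_mul]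
  exact (ENNReal.mul_le_mul_iff_right (by simp) (by finiteness)).1 h2

/-! ### Exponential moments of random signs -/

/-- The sum over sign patterns factors into `2 cosh (t v_i)`, each at most `2 exp (t² / 2)`. -/
lemma sum_exp_sign_le (m : ℕ) (v : Fin m → ℝ) (hv : ∀ i, |v i| ≤ 1) (t : ℝ) :
    ∑ σ : Fin m → Bool, Real.exp (t * ∑ i, (if σ i then -v i else v i)) ≤
      2 ^ m * Real.exp (t ^ 2 / 2 * m) := by
  have h1 : ∀ σ : Fin m → Bool, Real.exp (t * ∑ i, (if σ i then -v i else v i))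
      = ∏ i, Real.exp (t * (if σ i then -v i else v i)) := by
    intro σ
    rw [Finset.mul_sum, Real.exp_sum]
  simp only [h1]
  rw [← Fintype.prod_sum (fun i (b : Bool) => Real.exp (t * (if b then -v i else v i)))]
  calc ∏ i, ∑ b : Bool, Real.exp (t * (if b then -v i else v i))
      ≤ ∏ _i : Fin m, (2 * Real.exp (t ^ 2 / 2)) := by
        refine Finset.prod_le_prod (fun i _ => by positivity) fun i _ => ?_
        have hc := Real.cosh_le_exp_half_sq (t * v i)
        have hs : (t * v i) ^ 2 / 2 ≤ t ^ 2 / 2 := by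
          have : (v i) ^ 2 ≤ 1 := (sq_le_one_iff_abs_le_one _).2 (hv i)
          nlinarith [sq_nonneg t]
        have := Real.exp_le_exp.2 hs
        rw [Real.cosh_eq] at hc
        simp only [Fintype.sum_bool, if_true, Bool.false_eq_true, if_false, mul_neg]
        linarith
    _ = 2 ^ m * Real.exp (t ^ 2 / 2 * m) := by
        simp [mul_pow, ← Real.exp_nat_mul, mul_comm]

/-- The signed excess of mistakes of `h` at position `i`. -/
def excessAt (h : Hyp) {m : ℕ} (z : (Fin m → ℕ × Bool) × (Fin m → ℕ × Bool)) (i : Fin m) : ℝ :=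
  (if h (z.2 i).1 ≠ (z.2 i).2 then 1 else 0) - (if h (z.1 i).1 ≠ (z.1 i).2 then 1 else 0)

lemma sum_excessAt (h : Hyp) {m : ℕ} (z : (Fin m → ℕ × Bool) × (Fin m → ℕ × Bool)) :
    ∑ i, excessAt h z i = (mistakes h z.2 : ℝ) - mistakes h z.1 := by
  simp [excessAt, mistakes, Finset.sum_sub_distrib]

lemma excessAt_swap (h : Hyp) {m : ℕ} (z : (Fin m → ℕ × Bool) × (Fin m → ℕ × Bool))
    (σ : Fin m → Bool) (i : Fin m) :
    excessAt h (swapEquiv σ z) i = if σ i then -excessAt h z i else excessAt h z i := by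
  change (if h (if σ i then z.1 i else z.2 i).1 ≠ (if σ i then z.1 i else z.2 i).2
    then (1 : ℝ) else 0) - (if h (if σ i then z.2 i else z.1 i).1 ≠
      (if σ i then z.2 i else z.1 i).2 then 1 else 0) = _
  cases σ i <;> simp [excessAt]

lemma abs_excessAt_le (h : Hyp) {m : ℕ} (z : (Fin m → ℕ × Bool) × (Fin m → ℕ × Bool))
    (i : Fin m) : |excessAt h z i| ≤ 1 := by
  unfold excessAt
  split_ifs <;> simp

/-! ### Counting traces -/

/-- The Sauer–Shelah bound: a class of VC dimension at most `d` leaves few traces on `X`. -/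
lemma exists_traces (H : Set Hyp) (d : ℕ) (hH : VCDimAtMost H d) (X : Finset ℕ) :
    ∃ 𝒜 : Finset (Finset ℕ), 𝒜.card ≤ (d + 1) * (X.card + 1) ^ d ∧
      ∀ h ∈ H, ∃ s ∈ 𝒜, ∀ x ∈ X, h x = decide (x ∈ s) := by
  classical
  let 𝒜 : Finset (Finset ℕ) :=
    X.powerset.filter fun s => ∃ h ∈ H, X.filter (fun x => h x = true) = s
  refine ⟨𝒜, ?_, ?_⟩
  · have hsub : 𝒜.shatterer ⊆ (Finset.range (d + 1)).biUnion fun k => X.powersetCard k := by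
      intro s hs
      rw [Finset.mem_shatterer] at hs
      have hsX : s ⊆ X := by
        obtain ⟨t, ht, hst⟩ := hs.exists_superset
        exact hst.trans (Finset.mem_powerset.1 (Finset.mem_filter.1 ht).1)
      have hcard : s.card ≤ d := by
        refine hH s fun g => ?_
        obtain ⟨u, hu, hsu⟩ := hs (Finset.filter_subset (fun x => g x = true) s)
        obtain ⟨h, hh, rfl⟩ := (Finset.mem_filter.1 hu).2
        refine ⟨h, hh, fun x hx => ?_⟩
        have := Finset.ext_iff.1 hsu x
        simp only [Finset.mem_inter, Finset.mem_filter, hx, hsX hx, true_and] at this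
        exact Bool.eq_iff_iff.2 this
      simp only [Finset.mem_biUnion, Finset.mem_range, Finset.mem_powersetCard]
      exact ⟨s.card, by omega, hsX, rfl⟩
    calc 𝒜.card ≤ 𝒜.shatterer.card := Finset.card_le_card_shatterer 𝒜
      _ ≤ _ := Finset.card_le_card hsub
      _ ≤ ∑ k ∈ Finset.range (d + 1), (X.powersetCard k).card := Finset.card_biUnion_le
      _ ≤ ∑ k ∈ Finset.range (d + 1), (X.card + 1) ^ d := by
          refine Finset.sum_le_sum fun k hk => ?_
          rw [Finset.card_powersetCard]
          calc X.card.choose k ≤ X.card ^ k := Nat.choose_le_pow _ _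
            _ ≤ (X.card + 1) ^ k := by gcongr; omega
            _ ≤ (X.card + 1) ^ d := by
                gcongr
                · omega
                · have := Finset.mem_range.1 hk; omega
      _ = _ := by simp
  · intro h hh
    refine ⟨X.filter (fun x => h x = true), ?_, ?_⟩
    · exact Finset.mem_filter.2 ⟨Finset.mem_powerset.2 (Finset.filter_subset _ _), h, hh, rfl⟩
    · intro x hx
      simp [hx]

lemma mistakes_congr {h h' : Hyp} {m : ℕ} {x : Fin m → ℕ × Bool}
    (hx : ∀ i, h (x i).1 = h' (x i).1) : mistakes h x = mistakes h' x := by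
  simp [mistakes, hx]

/-! ### Uniform convergence -/

/-- The elementary bound on a maximum through exponential moments, summed over all exchanges of
a fixed pair of samples. -/
lemma sum_excess_swap_le (H : Set Hyp) (d : ℕ) (hH : VCDimAtMost H d) (m : ℕ) (t : ℝ) (ht : 0 < t)
    (z : (Fin m → ℕ × Bool) × (Fin m → ℕ × Bool)) :
    ∑ σ : Fin m → Bool, excess H (swapEquiv σ z) ≤
      2 ^ m * ENNReal.ofReal (t * m +
        (d + 1) * (2 * m + 1) ^ d * (Real.exp (-(t ^ 2 / 2 * m)) / t)) := by
  classical
  let X : Finset ℕ := (Finset.univ.image fun i => (z.1 i).1) ∪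
    (Finset.univ.image fun i => (z.2 i).1)
  have hX : X.card ≤ 2 * m := by
    refine (Finset.card_union_le _ _).trans ?_
    have h1 : (Finset.univ.image fun i => (z.1 i).1).card ≤ m := by
      simpa using Finset.card_image_le (s := Finset.univ) (f := fun i => (z.1 i).1)
    have h2 : (Finset.univ.image fun i => (z.2 i).1).card ≤ m := by
      simpa using Finset.card_image_le (s := Finset.univ) (f := fun i => (z.2 i).1)
    omega
  have hX1 : ∀ i, (z.1 i).1 ∈ X := fun i => by simp [X]
  have hX2 : ∀ i, (z.2 i).1 ∈ X := fun i => by simp [X]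
  obtain ⟨𝒜, hcard, htr⟩ := exists_traces H d hH X
  let ind : Finset ℕ → Hyp := fun s x => decide (x ∈ s)
  let G : (Fin m → Bool) → Finset ℕ → ℝ := fun σ s =>
    Real.exp (t * ∑ i, (if σ i then -excessAt (ind s) z i else excessAt (ind s) z i))
      * (Real.exp (-(t * (t * m))) / t)
  have hG : ∀ σ s, 0 ≤ G σ s := fun σ s => by positivity
  have key : ∀ σ : Fin m → Bool,
      excess H (swapEquiv σ z) ≤ ENNReal.ofReal (t * m + ∑ s ∈ 𝒜, G σ s) := by
    intro σ
    refine iSup₂_le fun h hh => ?_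
    obtain ⟨s, hs, hsX⟩ := htr h hh
    have hs1 : ∑ i, (if σ i then -excessAt (ind s) z i else excessAt (ind s) z i)
        = (mistakes h (swapEquiv σ z).2 : ℝ) - mistakes h (swapEquiv σ z).1 := by
      rw [← sum_excessAt]
      refine Finset.sum_congr rfl fun i _ => ?_
      rw [excessAt_swap]
      simp [excessAt, ind, hsX _ (hX1 i), hsX _ (hX2 i)]
    rw [← ENNReal.ofReal_natCast, ← ENNReal.ofReal_natCast,
      ← ENNReal.ofReal_sub _ (Nat.cast_nonneg _)]
    refine ENNReal.ofReal_le_ofReal ?_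
    have h2 : G σ s ≤ ∑ s ∈ 𝒜, G σ s :=
      Finset.single_le_sum (f := fun s => G σ s) (fun s _ => hG σ s) hs
    refine le_trans ?_ (add_le_add_right h2 _)
    simp only [G, hs1]
    generalize (mistakes h (swapEquiv σ z).2 : ℝ) - mistakes h (swapEquiv σ z).1 = r
    rw [← mul_div_assoc, ← Real.exp_add]
    have h3 := Real.add_one_le_exp (t * r + -(t * (t * m)))
    have h4 : r - t * m ≤ Real.exp (t * r + -(t * (t * m))) / t := by
      rw [le_div_iff₀ ht]
      nlinarith
    linarith
  calc ∑ σ : Fin m → Bool, excess H (swapEquiv σ z)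
      ≤ ∑ σ : Fin m → Bool, ENNReal.ofReal (t * m + ∑ s ∈ 𝒜, G σ s) :=
        Finset.sum_le_sum fun σ _ => key σ
    _ = ENNReal.ofReal (∑ σ : Fin m → Bool, (t * m + ∑ s ∈ 𝒜, G σ s)) := by
        rw [ENNReal.ofReal_sum_of_nonneg]
        intro σ _
        have := Finset.sum_nonneg fun s (_ : s ∈ 𝒜) => hG σ s
        positivity
    _ ≤ ENNReal.ofReal (2 ^ m * (t * m +
        (d + 1) * (2 * m + 1) ^ d * (Real.exp (-(t ^ 2 / 2 * m)) / t))) := by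
        refine ENNReal.ofReal_le_ofReal ?_
        rw [Finset.sum_add_distrib, Finset.sum_comm, mul_add]
        have hc : ∑ _σ : Fin m → Bool, t * (m : ℝ) = 2 ^ m * (t * m) := by simp
        rw [hc]
        refine add_le_add_right ?_ _
        have hs : ∀ s ∈ 𝒜, ∑ σ : Fin m → Bool, G σ s ≤
            2 ^ m * (Real.exp (-(t ^ 2 / 2 * m)) / t) := by
          intro s _
          simp only [G]
          rw [← Finset.sum_mul]
          calc _ ≤ 2 ^ m * Real.exp (t ^ 2 / 2 * m) * (Real.exp (-(t * (t * m))) / t) := by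
                gcongr
                exact sum_exp_sign_le m _ (abs_excessAt_le (ind s) z) t
            _ = 2 ^ m * (Real.exp (-(t ^ 2 / 2 * m)) / t) := by
                rw [mul_assoc, ← mul_div_assoc, ← Real.exp_add]
                congr 4
                ring
        have hcR : (𝒜.card : ℝ) ≤ (d + 1) * (2 * m + 1) ^ d := by
          have : 𝒜.card ≤ (d + 1) * (2 * m + 1) ^ d := hcard.trans (by gcongr)
          exact_mod_cast this
        calc ∑ s ∈ 𝒜, ∑ σ : Fin m → Bool, G σ s
            ≤ 𝒜.card • (2 ^ m * (Real.exp (-(t ^ 2 / 2 * m)) / t)) :=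
              Finset.sum_le_card_nsmul _ _ _ hs
          _ = 𝒜.card * (2 ^ m * (Real.exp (-(t ^ 2 / 2 * m)) / t)) := by simp
          _ ≤ (d + 1) * (2 * m + 1) ^ d * (2 ^ m * (Real.exp (-(t ^ 2 / 2 * m)) / t)) := by
              gcongr
          _ = _ := by ring
    _ = _ := by
        rw [ENNReal.ofReal_mul (by positivity), ENNReal.ofReal_pow (by norm_num)]
        simp

/-- Markov's inequality, in the form free of division. -/
lemma samplePr_deviation_le (H : Set Hyp) (d : ℕ) (hH : VCDimAtMost H d) (m : ℕ) (hm : 0 < m)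
    (D : PMF (ℕ × Bool)) (t : ℝ) (ht : 0 < t) (δ : ℝ≥0∞) :
    m * δ * samplePr D m {S | ∃ h ∈ H, empError S h + δ < genError D h} ≤
      ENNReal.ofReal (t * m +
        (d + 1) * (2 * m + 1) ^ d * (Real.exp (-(t ^ 2 / 2 * m)) / t)) := by
  refine le_trans ?_ ((tsum_deviation_le H D m).trans
    (tsum_excess_le D m _ _ (sum_excess_swap_le H d hH m t ht)))
  rw [samplePr_eq_tsum, ← ENNReal.tsum_mul_left]
  refine ENNReal.tsum_le_tsum fun x => ?_
  by_cases hx : List.ofFn x ∈ {S | ∃ h ∈ H, empError S h + δ < genError D h}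
  · rw [Set.indicator_of_mem hx, Pi.one_apply, mul_one, mul_comm]
    gcongr
    obtain ⟨h, hh, hlt⟩ := hx
    refine le_trans ?_
      (le_iSup₂ (f := fun h (_ : h ∈ H) => (m * genError D h - mistakes h x)) h hh)
    refine ENNReal.le_sub_of_add_le_left (by finiteness) ?_
    rw [empError_ofFn] at hlt
    have hm0 : (m : ℝ≥0∞) ≠ 0 := by exact_mod_cast hm.ne'
    calc (mistakes h x : ℝ≥0∞) + m * δ = m * (mistakes h x / m + δ) := by
          rw [mul_add, ENNReal.mul_div_cancel hm0 (by finiteness)]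
      _ ≤ _ := by gcongr
  · rw [Set.indicator_of_notMem hx]
    simp

lemma tendsto_tail (d : ℕ) (t : ℝ) (ht : 0 < t) :
    Tendsto (fun m : ℕ => (d + 1) * (2 * (m : ℝ) + 1) ^ d * (Real.exp (-(t ^ 2 / 2 * m)) / t))
      atTop (nhds 0) := by
  -- The substitution `u = a (2m + 1)` with `a = t² / 4` gives `-(t² / 2) m = a - u`.
  set a : ℝ := t ^ 2 / 4 with ha
  have hapos : 0 < a := by positivity
  have hu : Tendsto (fun m : ℕ => a * (2 * (m : ℝ) + 1)) atTop atTop := by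
    refine Tendsto.const_mul_atTop hapos (tendsto_atTop_add_const_right _ _ ?_)
    exact Tendsto.const_mul_atTop two_pos tendsto_natCast_atTop_atTop
  have h := ((Real.tendsto_pow_mul_exp_neg_atTop_nhds_zero d).comp hu).const_mul
    ((d + 1) * Real.exp a / t / a ^ d)
  rw [mul_zero] at h
  refine h.congr fun m => ?_
  have : Real.exp (-(t ^ 2 / 2 * m)) = Real.exp a * Real.exp (-(a * (2 * (m : ℝ) + 1))) := by
    rw [← Real.exp_add]
    congr 1
    rw [ha]; ring
  simp only [Function.comp, this, mul_pow]
  field_simp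

/-- One-sided uniform convergence, with a sample size depending only on the VC dimension. -/
lemma uniform_convergence (d : ℕ) (δ : ℝ) (hδ : 0 < δ) :
    ∃ m₀ : ℕ, ∀ m ≥ m₀, ∀ H : Set Hyp, VCDimAtMost H d → ∀ D : PMF (ℕ × Bool),
      samplePr D m {S | ∃ h ∈ H, empError S h + ENNReal.ofReal δ < genError D h} ≤
        ENNReal.ofReal δ := by
  set t : ℝ := δ ^ 2 / 2 with ht
  have htpos : 0 < t := by positivity
  obtain ⟨m₁, hm₁⟩ := eventually_atTop.1 ((tendsto_tail d t htpos).eventually_le_const htpos)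
  refine ⟨max m₁ 1, fun m hm H hH D => ?_⟩
  have hm1 : 1 ≤ m := (le_max_right _ _).trans hm
  have h1 := samplePr_deviation_le H d hH m hm1 D t htpos (ENNReal.ofReal δ)
  have h2 := hm₁ m ((le_max_left _ _).trans hm)
  have hmR : (1 : ℝ) ≤ m := by exact_mod_cast hm1
  have h3 : ENNReal.ofReal (t * m +
        (d + 1) * (2 * m + 1) ^ d * (Real.exp (-(t ^ 2 / 2 * m)) / t)) ≤
      m * ENNReal.ofReal δ * ENNReal.ofReal δ := by
    rw [← ENNReal.ofReal_natCast m, ← ENNReal.ofReal_mul (by positivity),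
      ← ENNReal.ofReal_mul (by positivity)]
    refine ENNReal.ofReal_le_ofReal ?_
    have : t ≤ t * m := le_mul_of_one_le_right htpos.le hmR
    have e : (m : ℝ) * δ * δ = t * m + t * m := by rw [ht]; ring
    linarith
  have hm0 : (m : ℝ≥0∞) ≠ 0 := by exact_mod_cast (by omega : m ≠ 0)
  refine (ENNReal.mul_le_mul_iff_right (a := m * ENNReal.ofReal δ) ?_ (by finiteness)).1
    (h1.trans h3)
  simp [hm0, hδ]

/-! ### Complements and the conclusion -/

/-- The hypothesis with all labels flipped. -/
def flipHyp (h : Hyp) : Hyp := fun x => !h x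

lemma genError_add_flip (D : PMF (ℕ × Bool)) (h : Hyp) :
    genError D h + genError D (flipHyp h) = 1 := by
  rw [genError_eq_tsum, genError_eq_tsum, ← ENNReal.tsum_add, ← D.tsum_coe]
  refine tsum_congr fun p => ?_
  rw [← mul_add]
  cases h1 : h p.1 <;> cases p.2 <;> simp [flipHyp, h1]

lemma empError_add_flip {S : Sample} (hS : S ≠ []) (h : Hyp) :
    empError S h + empError S (flipHyp h) = 1 := by
  have : ∀ S : Sample, (S.countP fun p => h p.1 != p.2) +
      (S.countP fun p => flipHyp h p.1 != p.2) = S.length := by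
    intro S
    induction S with
    | nil => simp
    | cons p S ih =>
      rw [List.countP_cons, List.countP_cons, List.length_cons, ← ih]
      cases h1 : h p.1 <;> cases p.2 <;> simp [flipHyp, h1] <;> omega
  rw [empError, empError, ENNReal.div_add_div_same, ← Nat.cast_add, this]
  exact ENNReal.div_self (by simpa using hS) (by finiteness)

lemma vcDimAtMost_singleton (h : Hyp) (d : ℕ) : VCDimAtMost {h} d := by
  intro s hs
  rcases s.eq_empty_or_nonempty with rfl | ⟨x, hx⟩
  · simp
  · obtain ⟨h', hh', he⟩ := hs (flipHyp h)
    rw [Set.mem_singleton_iff] at hh'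
    have := he x hx
    simp [hh', flipHyp] at this

/-- The union bound: outside two bad events the sample of size `m` is good. -/
lemma samplePr_ge (D : PMF (ℕ × Bool)) (m : ℕ) (G B₁ B₂ : Set Sample)
    (h : ∀ S : Sample, S.length = m → S ∉ B₁ → S ∉ B₂ → S ∈ G) :
    1 ≤ samplePr D m G + (samplePr D m B₁ + samplePr D m B₂) := by
  rw [samplePr_eq_tsum, samplePr_eq_tsum, samplePr_eq_tsum, ← tsum_tupleWt D m,
    ← ENNReal.tsum_add, ← ENNReal.tsum_add]
  refine ENNReal.tsum_le_tsum fun x => ?_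
  rw [← mul_add, ← mul_add]
  refine le_mul_of_one_le_right zero_le ?_
  by_cases h1 : List.ofFn x ∈ B₁
  · simp [h1, add_left_comm _ (1 : ℝ≥0∞)]
  by_cases h2 : List.ofFn x ∈ B₂
  · simp [h2, ← add_assoc]
  · simp [h _ (by simp) h1 h2]


/-- If `H` has finite VC dimension and `A` is an asymptotic ERM for
`H`, then `A` PAC learns `H`. -/
theorem asymptoticERM_PACLearns (H : Set Hyp) (A : Learner)
    (hVC : FiniteVCDim H) (hA : IsAsymptoticERM A H) : PACLearns A H := by
  intro n
  obtain ⟨d, hd⟩ := hVC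
  obtain ⟨hprop, ε, -, hε, hAε⟩ := hA
  -- For `n = 0` the confidence requirement is `1 - ⊤ = 0`.
  rcases Nat.eq_zero_or_pos n with rfl | hn
  · exact ⟨0, fun m _ D => by simp⟩
  set δ : ℝ := 1 / (4 * n) with hδ
  have hnR : (0 : ℝ) < n := by exact_mod_cast hn
  have hδpos : 0 < δ := by positivity
  set e := ENNReal.ofReal δ with he
  have hepos : 0 < e := by simpa [he] using hδpos
  have hetop : e ≠ ⊤ := ENNReal.ofReal_ne_top
  have h4 : (n : ℝ≥0∞)⁻¹ = e + e + e + e := by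
    rw [he, ← ENNReal.ofReal_add, ← ENNReal.ofReal_add, ← ENNReal.ofReal_add,
      ← ENNReal.ofReal_natCast, ← ENNReal.ofReal_inv_of_pos hnR]
    · congr 1
      rw [hδ]; field_simp; norm_num
    all_goals positivity
  obtain ⟨m₁, hm₁⟩ := uniform_convergence d δ hδpos
  obtain ⟨m₂, hm₂⟩ := eventually_atTop.1 (hε.eventually_le_const hepos)
  refine ⟨max (max m₁ m₂) 1, fun m hm D => ?_⟩
  have hmm₁ : m₁ ≤ m := (le_max_left _ _).trans ((le_max_left _ _).trans hm)
  have hmm₂ : m₂ ≤ m := (le_max_right _ _).trans ((le_max_left _ _).trans hm)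
  have hm1 : 1 ≤ m := (le_max_right _ _).trans hm
  have hgtop : ∀ h, genError D h ≠ ⊤ := fun h =>
    ne_top_of_le_ne_top ENNReal.one_ne_top ((genError_add_flip D h) ▸ le_self_add)
  -- A hypothesis of `H` whose generalization error is within `e` of the infimum.
  obtain ⟨h₀, hh₀, hinf⟩ : ∃ h₀ ∈ H, genError D h₀ ≤ (⨅ h ∈ H, genError D h) + e := by
    have hlt : (⨅ h ∈ H, genError D h) < (⨅ h ∈ H, genError D h) + e := by
      refine ENNReal.lt_add_right ?_ hepos.ne'
      exact ne_top_of_le_ne_top (hgtop (A [])) (iInf₂_le _ (hprop []))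
    simp only [iInf_lt_iff] at hlt
    obtain ⟨h₀, hh₀, h⟩ := hlt
    exact ⟨h₀, hh₀, h.le⟩
  have hb₁ := hm₁ m hmm₁ H hd D
  -- The lower deviation of `h₀` is the upper deviation of its complement.
  have hb₂ := hm₁ m hmm₁ {flipHyp h₀} (vcDimAtMost_singleton _ _) D
  rw [← he] at hb₁ hb₂
  rw [tsub_le_iff_right]
  refine (samplePr_ge D m {S | genError D (A S) ≤ (⨅ h ∈ H, genError D h) + (n : ℝ≥0∞)⁻¹}
    {S | ∃ h ∈ H, empError S h + e < genError D h}
    {S | ∃ h ∈ ({flipHyp h₀} : Set Hyp), empError S h + e < genError D h} ?_).trans ?_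
  · intro S hS hS1 hS2
    have hSne : S ≠ [] := by
      rintro rfl
      simp at hS
      omega
    simp only [Set.mem_setOf_eq, not_exists, not_and, not_lt] at hS1 hS2
    have i1 := hS1 (A S) (hprop S)
    have i2 := hS2 (flipHyp h₀) rfl
    have i3 : empError S h₀ ≤ genError D h₀ + e := by
      have hf : empError S (flipHyp h₀) ≠ ⊤ :=
        ne_top_of_le_ne_top ENNReal.one_ne_top ((empError_add_flip hSne h₀) ▸ le_add_self)
      refine (ENNReal.add_le_add_iff_right hf).1 ?_
      rw [empError_add_flip hSne, ← genError_add_flip D h₀, add_assoc, add_comm e]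
      gcongr
    have i4 : empError S (A S) ≤ empError S h₀ + e :=
      (hAε S).trans (add_le_add (iInf₂_le _ hh₀) (hm₂ _ (hS ▸ hmm₂)))
    change genError D (A S) ≤ _
    calc genError D (A S) ≤ empError S (A S) + e := i1
      _ ≤ (empError S h₀ + e) + e := by gcongr
      _ ≤ ((genError D h₀ + e) + e) + e := by gcongr
      _ ≤ ((((⨅ h ∈ H, genError D h) + e) + e) + e) + e := by gcongr
      _ = _ := by rw [h4]; ring
  · refine add_le_add_right ((add_le_add hb₁ hb₂).trans ?_) _
    rw [h4, add_assoc (e + e)]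
    exact le_self_add
end
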